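/- arXiv:2412.00764 — 7 statements merged into one kernel-verified Lean document; each statement's English description precedes it below -/
import Mathlib

section
/- For every z > 0 and every real polynomial p, the truncated Freud linear functional u satisfies the distributional Pearson equation D((x²−z²)u) + (4x³(x²−z²)−2x)u = 0; explicitly, ∫_{−z}^{z} [ −(x²−z²)·p′(x) + (4x³(x²−z²) − 2x)·p(x) ] e^{−x⁴} dx = 0. -/
/-!
A weight `w` with `(φ w)' = -ψ w` defines a functional `v` with `D(φ v) + ψ v = 0`, provided that
`φ w` vanishes at both ends of the interval of integration: tested against `f`, the left-hand side
is `-∫ (φ w f)'`. For `w = e^{-V}` this means `ψ = V' φ - φ'`. The factor `x² - z²` kills the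
boundary terms created by truncating the Freud weight `V = x⁴` to `[-z, z]`.
-/

open MeasureTheory Real Set
open scoped Interval

theorem integral_pearson_eq_zero_of_hasDerivWithinAt {a b : ℝ} {φ ψ w f f' : ℝ → ℝ}
    (hφw : ∀ x ∈ [[a, b]], HasDerivWithinAt (fun y ↦ φ y * w y) (-(ψ x * w x)) [[a, b]] x)
    (hf : ∀ x ∈ [[a, b]], HasDerivWithinAt f (f' x) [[a, b]] x)
    (hψw : IntervalIntegrable (fun x ↦ ψ x * w x) volume a b)
    (hf' : IntervalIntegrable f' volume a b)
    (ha : φ a * w a = 0) (hb : φ b * w b = 0) :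
    ∫ x in a..b, (-φ x * f' x + ψ x * f x) * w x = 0 :=
  calc
    ∫ x in a..b, (-φ x * f' x + ψ x * f x) * w x
    _ = -∫ x in a..b, -(ψ x * w x) * f x + φ x * w x * f' x := by
      rw [← intervalIntegral.integral_neg]
      congr! 2
      ring
    _ = -(φ b * w b * f b - φ a * w a * f a) := by
      rw [intervalIntegral.integral_deriv_mul_eq_sub_of_hasDerivWithinAt hφw hf hψw.neg hf']
    _ = 0 := by rw [ha, hb]; ring

theorem hasDerivAt_mul_exp_neg {φ V : ℝ → ℝ} {φ' V' x : ℝ}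
    (hφ : HasDerivAt φ φ' x) (hV : HasDerivAt V V' x) :
    HasDerivAt (fun y ↦ φ y * exp (-V y)) (-((V' * φ x - φ') * exp (-V x))) x :=
  (hφ.mul hV.neg.exp).congr_deriv (by simp only [Pi.neg_apply]; ring)

theorem hasDerivAt_sq_sub_sq_mul_exp_neg_pow_four (z x : ℝ) :
    HasDerivAt (fun y ↦ (y ^ 2 - z ^ 2) * exp (-y ^ 4))
      (-((4 * x ^ 3 * (x ^ 2 - z ^ 2) - 2 * x) * exp (-x ^ 4))) x := by
  have hφ : HasDerivAt (fun y ↦ y ^ 2 - z ^ 2) (2 * x) x := by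
    simpa using (hasDerivAt_pow 2 x).sub_const (z ^ 2)
  have hV : HasDerivAt (fun y ↦ y ^ 4) (4 * x ^ 3) x := by
    simpa using hasDerivAt_pow 4 x
  exact hasDerivAt_mul_exp_neg hφ hV

theorem truncated_freud_pearson_equation_general {z : ℝ} {f f' : ℝ → ℝ}
    (hf : ∀ x ∈ [[-z, z]], HasDerivWithinAt f (f' x) [[-z, z]] x)
    (hf' : IntervalIntegrable f' volume (-z) z) :
    ∫ x in (-z)..z,
      (-(x ^ 2 - z ^ 2) * f' x
        + (4 * x ^ 3 * (x ^ 2 - z ^ 2) - 2 * x) * f x) * exp (-x ^ 4) = 0 := by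
  have hψw : Continuous fun x : ℝ ↦
      (4 * x ^ 3 * (x ^ 2 - z ^ 2) - 2 * x) * exp (-x ^ 4) := by fun_prop
  exact integral_pearson_eq_zero_of_hasDerivWithinAt
    (fun x _ ↦ (hasDerivAt_sq_sub_sq_mul_exp_neg_pow_four z x).hasDerivWithinAt) hf
    (hψw.intervalIntegrable _ _) hf' (by simp) (by simp)

/-- For every `z > 0` and every real polynomial `p`, the truncated Freud linear
functional `u`, `⟨u, p⟩ = ∫_{-z}^{z} p(x) e^{-x⁴} dx`, satisfies the distributional
Pearson equation `D((x²-z²)u) + (4x³(x²-z²)-2x)u = 0`. -/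
theorem truncated_freud_pearson_equation (z : ℝ) (hz : 0 < z) (p : Polynomial ℝ) :
    ∫ x in (-z)..z,
      (-(x ^ 2 - z ^ 2) * (Polynomial.derivative p).eval x
        + (4 * x ^ 3 * (x ^ 2 - z ^ 2) - 2 * x) * p.eval x) * Real.exp (-x ^ 4) = 0 :=
  truncated_freud_pearson_equation_general (fun x _ ↦ p.hasDerivWithinAt x _)
    (p.derivative.continuous.intervalIntegrable _ _)
end

section
/- For every z > 0 and every n ≥ 0, the even moments u_{2n}(z) = ∫_{−z}^{z} x^{2n} e^{−x⁴} dx satisfy 4·u_{2n+4} = (2n+1)·u_{2n} − 2·z^{2n+1}·e^{−z⁴}. -/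
/-!
The weight `w = e^{-φ}` satisfies `w' = -φ' w`, so integrating `(f w)' = f' w - f φ' w` over
`[a, b]` trades a factor `φ'` for a derivative of `f`, up to boundary terms. For `φ = x ^ k` and
`f = x ^ (m + 1)` this relates the moments of order `m + k` and `m`; on `[-z, z]`, with `m` and `k`
even, `f w` is odd, so its two boundary values add up.
-/

open Real

theorem integral_mul_deriv_mul_exp_neg {a b : ℝ} {f f' φ φ' : ℝ → ℝ}
    (hf : ∀ x ∈ Set.uIcc a b, HasDerivAt f (f' x) x)
    (hφ : ∀ x ∈ Set.uIcc a b, HasDerivAt φ (φ' x) x)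
    (hf' : IntervalIntegrable f' MeasureTheory.volume a b)
    (hφ' : IntervalIntegrable φ' MeasureTheory.volume a b) :
    ∫ x in a..b, f x * φ' x * exp (-φ x) =
      (∫ x in a..b, f' x * exp (-φ x)) - (f b * exp (-φ b) - f a * exp (-φ a)) := by
  have hw : ∀ x ∈ Set.uIcc a b,
      HasDerivAt (fun x ↦ exp (-φ x)) (exp (-φ x) * -φ' x) x :=
    fun x hx ↦ (hφ x hx).fun_neg.exp
  have hw' : IntervalIntegrable (fun x ↦ exp (-φ x) * -φ' x) MeasureTheory.volume a b :=
    hφ'.neg.continuousOn_mul (HasDerivAt.continuousOn hw)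
  have parts := intervalIntegral.integral_mul_deriv_eq_deriv_mul hf hw hf' hw'
  have integrand_eq : ∀ x, f x * (exp (-φ x) * -φ' x) = -(f x * φ' x * exp (-φ x)) :=
    fun x ↦ by ring
  simp only [integrand_eq, intervalIntegral.integral_neg] at parts
  linarith

theorem integral_pow_add_mul_exp_neg_pow (a b : ℝ) (m k : ℕ) :
    k * ∫ x in a..b, x ^ (m + k) * exp (-x ^ k) =
      (m + 1) * (∫ x in a..b, x ^ m * exp (-x ^ k))
        - (b ^ (m + 1) * exp (-b ^ k) - a ^ (m + 1) * exp (-a ^ k)) := by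
  have pow_mul_deriv (x : ℝ) : x ^ (m + 1) * (k * x ^ (k - 1)) = k * x ^ (m + k) := by
    -- For `k = 0` the subtraction truncates, but both sides vanish.
    cases k with
    | zero => simp
    | succ k => rw [Nat.add_sub_cancel]; ring
  have hf (x : ℝ) : HasDerivAt (fun x ↦ x ^ (m + 1)) ((m + 1) * x ^ m) x := by
    simpa using hasDerivAt_pow (m + 1) x
  have parts := integral_mul_deriv_mul_exp_neg (a := a) (b := b) (fun x _ ↦ hf x)
    (fun x _ ↦ hasDerivAt_pow k x)
    (Continuous.intervalIntegrable (by fun_prop) _ _)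
    (Continuous.intervalIntegrable (by fun_prop) _ _)
  simpa only [pow_mul_deriv, mul_assoc, intervalIntegral.integral_const_mul] using parts

theorem truncated_freud_moment_relation_general (z : ℝ) {m k : ℕ} (hm : Even m) (hk : Even k) :
    k * ∫ x in (-z)..z, x ^ (m + k) * exp (-x ^ k) =
      (m + 1) * (∫ x in (-z)..z, x ^ m * exp (-x ^ k))
        - 2 * z ^ (m + 1) * exp (-z ^ k) := by
  rw [integral_pow_add_mul_exp_neg_pow, hm.add_one.neg_pow, hk.neg_pow]
  ring

/-- For every `z > 0` and `n ≥ 0`, the even moments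
`u_{2n}(z) = ∫_{-z}^{z} x^{2n} e^{-x⁴} dx` satisfy
`4·u_{2n+4} = (2n+1)·u_{2n} - 2·z^{2n+1}·e^{-z⁴}`. -/
theorem truncated_freud_moment_relation (z : ℝ) (hz : 0 < z) (n : ℕ) :
    4 * (∫ x in (-z)..z, x ^ (2 * n + 4) * Real.exp (-x ^ 4)) =
      (2 * (n : ℝ) + 1) * (∫ x in (-z)..z, x ^ (2 * n) * Real.exp (-x ^ 4))
        - 2 * z ^ (2 * n + 1) * Real.exp (-z ^ 4) := by
  exact_mod_cast truncated_freud_moment_relation_general z (even_two_mul n) (by decide : Even 4)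
end

section
/- For every z > 0 and every n ≥ 0, the even moments u_{2n}(z) = ∫_{−z}^{z} x^{2n} e^{−x⁴} dx satisfy the four-term recurrence relation 4·u_{2n+6} − 4z²·u_{2n+4} − (2n+3)·u_{2n+2} + (2n+1)·z²·u_{2n} = 0. -/
/-!
For the weight `e^{-V}` on `[a, b]`, with `V` a polynomial, the fundamental theorem of calculus says
that the integral of `(q' - V' q) e^{-V} = (q e^{-V})'` is a boundary term. It vanishes as soon as
`q` does at both endpoints. On `[-z, z]` the polynomials `q = (z² - x²) x^{m+1}` do, and for
`V = x^d` the resulting identities are the moment recurrence.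
-/

open Polynomial intervalIntegral

theorem derivative_X_pow_mul_X {R : Type*} [Semiring R] (d : ℕ) :
    derivative (X ^ d) * X = (d : R[X]) * X ^ d := by
  cases d with
  | zero => simp
  | succ d => rw [derivative_X_pow_succ, mul_assoc, ← pow_succ]; simp

/-- The linear functional `p ↦ ∫_a^b p(x) e^{-V(x)} dx` on real polynomials. The truncated Freud
functional is the case `V = X ^ 4`, `a = -z`, `b = z`; the potential `V` is kept polynomial so that
the functional can be applied to `V'` times a polynomial. -/
noncomputable def expWeightFunctional (V : ℝ[X]) (a b : ℝ) : ℝ[X] →ₗ[ℝ] ℝ where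
  toFun p := ∫ x in a..b, p.eval x * Real.exp (-V.eval x)
  map_add' p q := by
    simp only [eval_add, add_mul]
    exact integral_add (Continuous.intervalIntegrable (by fun_prop) _ _)
      (Continuous.intervalIntegrable (by fun_prop) _ _)
  map_smul' c p := by
    simp only [eval_smul, smul_eq_mul, mul_assoc, integral_const_mul, RingHom.id_apply]

namespace expWeightFunctional

variable (V : ℝ[X]) (a b : ℝ)

theorem apply_eq_integral (p : ℝ[X]) :
    expWeightFunctional V a b p = ∫ x in a..b, p.eval x * Real.exp (-V.eval x) :=
  rfl

theorem apply_derivative_sub_derivative_mul (q : ℝ[X]) :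
    expWeightFunctional V a b (derivative q - derivative V * q) =
      q.eval b * Real.exp (-V.eval b) - q.eval a * Real.exp (-V.eval a) := by
  have hderiv (x : ℝ) : HasDerivAt (fun x => q.eval x * Real.exp (-V.eval x))
      ((derivative q - derivative V * q).eval x * Real.exp (-V.eval x)) x := by
    refine ((q.hasDerivAt x).fun_mul (V.hasDerivAt x).fun_neg.exp).congr_deriv ?_
    simp only [eval_sub, eval_mul]
    ring
  exact integral_eq_sub_of_hasDerivAt (fun x _ => hderiv x)
    (Continuous.intervalIntegrable (by fun_prop) _ _)

variable {a b} in
theorem apply_derivative_sub_derivative_mul_eq_zero {q : ℝ[X]} (ha : q.IsRoot a)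
    (hb : q.IsRoot b) : expWeightFunctional V a b (derivative q - derivative V * q) = 0 := by
  rw [apply_derivative_sub_derivative_mul, ha.eq_zero, hb.eq_zero, zero_mul, zero_mul, sub_zero]

theorem X_pow_recurrence (d m : ℕ) (z : ℝ) :
    let u := expWeightFunctional (X ^ d) (-z) z
    d * u (X ^ (m + d + 2)) - d * z ^ 2 * u (X ^ (m + d)) - (m + 3) * u (X ^ (m + 2))
      + (m + 1) * z ^ 2 * u (X ^ m) = 0 := by
  intro u
  let q : ℝ[X] := (C (z ^ 2) - X ^ 2) * X ^ (m + 1)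
  have hq : derivative q - derivative (X ^ d) * q =
      (d : ℝ) • X ^ (m + d + 2) - (d * z ^ 2) • X ^ (m + d) - (m + 3 : ℝ) • X ^ (m + 2)
        + ((m + 1) * z ^ 2) • X ^ m := by
    simp only [q, derivative_mul, derivative_sub, derivative_C, derivative_X_pow_succ,
      smul_eq_C_mul, map_add, map_mul, map_natCast, map_ofNat, map_one]
    linear_combination (X ^ 2 - C (z ^ 2)) * X ^ m * derivative_X_pow_mul_X (R := ℝ) d
  have pearson : u (derivative q - derivative (X ^ d) * q) = 0 :=
    apply_derivative_sub_derivative_mul_eq_zero _ (by simp [q]) (by simp [q])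
  simpa only [hq, map_add, map_sub, map_smul, smul_eq_mul] using pearson

end expWeightFunctional

theorem truncated_freud_moment_recurrence_general (d m : ℕ) (z : ℝ) :
    d * (∫ x in (-z)..z, x ^ (m + d + 2) * Real.exp (-x ^ d))
      - d * z ^ 2 * (∫ x in (-z)..z, x ^ (m + d) * Real.exp (-x ^ d))
      - (m + 3) * (∫ x in (-z)..z, x ^ (m + 2) * Real.exp (-x ^ d))
      + (m + 1) * z ^ 2 * (∫ x in (-z)..z, x ^ m * Real.exp (-x ^ d)) = 0 := by
  simpa only [expWeightFunctional.apply_eq_integral, eval_pow, eval_X] using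
    expWeightFunctional.X_pow_recurrence d m z

/-- For every `z > 0` and `n ≥ 0`, the even moments
`u_{2n}(z) = ∫_{-z}^{z} x^{2n} e^{-x⁴} dx` satisfy the four-term recurrence
`4·u_{2n+6} - 4z²·u_{2n+4} - (2n+3)·u_{2n+2} + (2n+1)·z²·u_{2n} = 0`. -/
theorem truncated_freud_moment_recurrence (z : ℝ) (hz : 0 < z) (n : ℕ) :
    4 * (∫ x in (-z)..z, x ^ (2 * n + 6) * Real.exp (-x ^ 4))
      - 4 * z ^ 2 * (∫ x in (-z)..z, x ^ (2 * n + 4) * Real.exp (-x ^ 4))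
      - (2 * (n : ℝ) + 3) * (∫ x in (-z)..z, x ^ (2 * n + 2) * Real.exp (-x ^ 4))
      + (2 * (n : ℝ) + 1) * z ^ 2 * (∫ x in (-z)..z, x ^ (2 * n) * Real.exp (-x ^ 4)) = 0 := by
  exact_mod_cast truncated_freud_moment_recurrence_general 4 (2 * n) z
end

section
/- For every z > 0, the recurrence coefficients γ_n = γ_n(z) of the monic orthogonal polynomials for the weight e^{−x⁴} on [−z, z] satisfy, for all n ≥ 2, the Laguerre–Freud equation z²/4 = γ_n·[ γ_{n−1}·(γ_{n−2} + γ_{n−1} + γ_n − z²) + γ_n·(γ_{n+1} + γ_n + γ_{n−1} − z²) + 1/4 − n/2 ] − γ_{n+1}·[ γ_{n+2}·(γ_{n+3} + γ_{n+2} + γ_{n+1} − z²) + γ_{n+1}·(γ_{n+2} + γ_{n+1} + γ_n − z²) − n/2 − 3/4 ]. -/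
/-!
Put `w(x) = e^{-x⁴}` and `φ(x) = x² - z²`. As `φ` vanishes at `±z`, the functional `L q = ∫ q w`
satisfies the Pearson equation `L ((φ q)') = 4 L (x³ φ q)`, and the rest is algebra valid for every
functional with this property. Taking `q = P_{n+1} P_n` and evaluating both sides by orthogonality
and the recurrence gives an equation that contains the sum `γ_1 + ⋯ + γ_n`, which is minus the
coefficient of `x^{n-1}` in `P_{n+1}`. Subtracting two consecutive instances removes the sum.
-/

section OrthogonalPolynomials

open Polynomial

/-- The functional `q ↦ ∫ x in a..b, q(x) e^{-V(x)}` on real polynomials, the moment functional of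
the weight `e^{-V}` on `[a, b]` when `a ≤ b`. -/
noncomputable def expNegFunctional (V : ℝ[X]) (a b : ℝ) : ℝ[X] →ₗ[ℝ] ℝ where
  toFun q := ∫ x in a..b, q.eval x * Real.exp (-V.eval x)
  map_add' p q := by
    simp only [eval_add, add_mul]
    exact intervalIntegral.integral_add
      (Continuous.intervalIntegrable (by fun_prop) a b)
      (Continuous.intervalIntegrable (by fun_prop) a b)
  map_smul' c q := by
    simp only [eval_smul, smul_eq_mul, mul_assoc, intervalIntegral.integral_const_mul,
      RingHom.id_apply]

theorem expNegFunctional_apply (V : ℝ[X]) (a b : ℝ) (q : ℝ[X]) :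
    expNegFunctional V a b q = ∫ x in a..b, q.eval x * Real.exp (-V.eval x) := rfl

theorem expNegFunctional_derivative (V : ℝ[X]) {a b : ℝ} {p : ℝ[X]}
    (ha : p.IsRoot a) (hb : p.IsRoot b) :
    expNegFunctional V a b (derivative p) = expNegFunctional V a b (derivative V * p) := by
  have hderiv (x : ℝ) : HasDerivAt (fun x => p.eval x * Real.exp (-V.eval x))
      ((derivative p - derivative V * p).eval x * Real.exp (-V.eval x)) x := by
    refine ((p.hasDerivAt x).fun_mul (V.hasDerivAt x).fun_neg.exp).congr_deriv ?_
    rw [eval_sub, eval_mul]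
    ring
  rw [← sub_eq_zero, ← map_sub, expNegFunctional_apply,
    intervalIntegral.integral_eq_sub_of_hasDerivAt (fun x _ => hderiv x)
      (Continuous.intervalIntegrable (by fun_prop) a b),
    ha.eq_zero, hb.eq_zero, zero_mul, zero_mul, sub_zero]

variable {R : Type*} [CommRing R] {L : R[X] →ₗ[R] R} {P : ℕ → R[X]} {γ h : ℕ → R}

theorem map_C_mul (L : R[X] →ₗ[R] R) (c : R) (p : R[X]) : L (C c * p) = c * L p := by
  rw [C_mul', map_smul, smul_eq_mul]

/-- The Pearson equation `φ w' = -4 x³ φ w`, `φ = x² - a`, of the Freud weight `w = e^{-x⁴}`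
truncated at `±√a`, expressed through the moment functional `L` of `w`. -/
def IsTruncatedFreud (L : R[X] →ₗ[R] R) (a : R) : Prop :=
  ∀ q : R[X], L (derivative ((X ^ 2 - C a) * q)) = 4 * L (X ^ 3 * ((X ^ 2 - C a) * q))

theorem isTruncatedFreud_expNegFunctional (z : ℝ) :
    IsTruncatedFreud (expNegFunctional (X ^ 4) (-z) z) (z ^ 2) := by
  intro q
  rw [expNegFunctional_derivative _ (by simp) (by simp), ← map_C_mul, derivative_X_pow, mul_assoc]
  norm_num

/-- `P` is the sequence of monic orthogonal polynomials of a functional `L` whose odd moments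
vanish, `γ` its recurrence coefficients and `h` its squared norms. At `n = 0` the index `n - 1`
truncates to `0`, which is harmless because `γ 0 = 0`. -/
structure IsSymmetricOPS (L : R[X] →ₗ[R] R) (P : ℕ → R[X]) (γ h : ℕ → R) : Prop where
  isMonicOfDegree (n : ℕ) : IsMonicOfDegree (P n) n
  orthogonal {m n : ℕ} (hmn : m ≠ n) : L (P m * P n) = 0
  apply_mul_self (n : ℕ) : L (P n * P n) = h n
  coeff_zero : γ 0 = 0
  X_mul (n : ℕ) : X * P n = P (n + 1) + C (γ n) * P (n - 1)

namespace IsSymmetricOPS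

theorem zero_eq_one (hP : IsSymmetricOPS L P γ h) : P 0 = 1 :=
  isMonicOfDegree_zero_iff.mp (hP.isMonicOfDegree 0)

theorem one_eq_X (hP : IsSymmetricOPS L P γ h) : P 1 = X := by
  simpa [hP.coeff_zero, hP.zero_eq_one] using (hP.X_mul 0).symm

theorem X_mul_succ (hP : IsSymmetricOPS L P γ h) (n : ℕ) :
    X * P (n + 1) = P (n + 2) + C (γ (n + 1)) * P n :=
  hP.X_mul (n + 1)

theorem coeff_self (hP : IsSymmetricOPS L P γ h) (n : ℕ) : (P n).coeff n = 1 := by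
  simpa only [leadingCoeff, (hP.isMonicOfDegree n).natDegree_eq] using
    (hP.isMonicOfDegree n).leadingCoeff_eq

theorem natDegree_derivative_le (hP : IsSymmetricOPS L P γ h) (n : ℕ) :
    (derivative (P n)).natDegree ≤ n - 1 := by
  simpa only [(hP.isMonicOfDegree n).natDegree_eq] using Polynomial.natDegree_derivative_le (P n)

theorem apply_mul_X_pow_of_lt (hP : IsSymmetricOPS L P γ h) {j m : ℕ} (hjm : j < m) :
    L (P m * X ^ j) = 0 := by
  induction j generalizing m with
  | zero => simpa [hP.zero_eq_one] using hP.orthogonal hjm.ne'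
  | succ j ih =>
    have hexpand : P m * X ^ (j + 1) = P (m + 1) * X ^ j + C (γ m) * (P (m - 1) * X ^ j) := by
      linear_combination X ^ j * hP.X_mul m
    rw [hexpand, map_add, map_C_mul, ih (by lia), ih (by lia), mul_zero, add_zero]

theorem norm_succ (hP : IsSymmetricOPS L P γ h) (n : ℕ) : h (n + 1) = γ (n + 1) * h n := by
  have hexpand : P (n + 1) * P (n + 1) + C (γ n) * (P (n + 1) * P (n - 1)) =
      P (n + 2) * P n + C (γ (n + 1)) * (P n * P n) := by
    linear_combination P n * hP.X_mul_succ n - P (n + 1) * hP.X_mul n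
  simpa only [map_add, map_C_mul, hP.apply_mul_self, hP.orthogonal (show n + 1 ≠ n - 1 by lia),
    hP.orthogonal (show n + 2 ≠ n by lia), mul_zero, add_zero, zero_add] using congrArg L hexpand

theorem apply_mul_X_pow_self (hP : IsSymmetricOPS L P γ h) (m : ℕ) : L (P m * X ^ m) = h m := by
  induction m with
  | zero => simpa [hP.zero_eq_one] using hP.apply_mul_self 0
  | succ m ih =>
    have hexpand : P (m + 1) * X ^ (m + 1) =
        P (m + 2) * X ^ m + C (γ (m + 1)) * (P m * X ^ m) := by
      linear_combination X ^ m * hP.X_mul_succ m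
    rw [hexpand, map_add, map_C_mul, hP.apply_mul_X_pow_of_lt (by lia), ih, zero_add, hP.norm_succ]

theorem apply_mul_of_natDegree_le (hP : IsSymmetricOPS L P γ h) {m : ℕ} {q : R[X]}
    (hq : q.natDegree ≤ m) : L (P m * q) = q.coeff m * h m := by
  calc L (P m * q) = ∑ j ∈ Finset.range (m + 1), q.coeff j * L (P m * X ^ j) := by
        conv_lhs => rw [as_sum_range_C_mul_X_pow' q (Nat.lt_succ_of_le hq)]
        simp only [Finset.mul_sum, map_sum, mul_left_comm (P m), map_C_mul]
    _ = q.coeff m * h m := by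
        rw [Finset.sum_range_succ, hP.apply_mul_X_pow_self, Finset.sum_eq_zero, zero_add]
        intro j hj
        rw [hP.apply_mul_X_pow_of_lt (Finset.mem_range.mp hj), mul_zero]

theorem apply_mul_eq_zero_of_natDegree_lt (hP : IsSymmetricOPS L P γ h) {m : ℕ} {q : R[X]}
    (hq : q.natDegree < m) : L (P m * q) = 0 := by
  rw [hP.apply_mul_of_natDegree_le hq.le, coeff_eq_zero_of_natDegree_lt hq, zero_mul]

theorem natDegree_X_pow_mul_le (hP : IsSymmetricOPS L P γ h) (k n : ℕ) :
    (X ^ k * P n).natDegree ≤ k + n :=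
  natDegree_mul_le_of_le (natDegree_X_pow_le k) (hP.isMonicOfDegree n).natDegree_eq.le

theorem apply_X_pow_mul_add_mul (hP : IsSymmetricOPS L P γ h) (k n : ℕ) :
    L (X ^ k * (P (n + k) * P n)) = h (n + k) := by
  rw [mul_left_comm, hP.apply_mul_of_natDegree_le ((hP.natDegree_X_pow_mul_le k n).trans (by lia)),
    coeff_X_pow_mul, hP.coeff_self, one_mul]

theorem apply_X_pow_mul_mul_of_lt (hP : IsSymmetricOPS L P γ h) {k m n : ℕ} (hlt : k + n < m) :
    L (X ^ k * (P m * P n)) = 0 := by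
  rw [mul_left_comm,
    hP.apply_mul_eq_zero_of_natDegree_lt ((hP.natDegree_X_pow_mul_le k n).trans_lt hlt)]

theorem apply_mul_derivative_succ (hP : IsSymmetricOPS L P γ h) (n : ℕ) :
    L (P n * derivative (P (n + 1))) = (n + 1) * h n := by
  have hdeg : (derivative (P (n + 1))).natDegree ≤ n := hP.natDegree_derivative_le (n + 1)
  rw [hP.apply_mul_of_natDegree_le hdeg, coeff_derivative, hP.coeff_self, one_mul]

theorem apply_succ_mul_derivative (hP : IsSymmetricOPS L P γ h) (n : ℕ) :
    L (P (n + 1) * derivative (P n)) = 0 :=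
  hP.apply_mul_eq_zero_of_natDegree_lt ((hP.natDegree_derivative_le n).trans_lt (by lia))

theorem apply_succ_mul_X_sq_mul_derivative (hP : IsSymmetricOPS L P γ h) (n : ℕ) :
    L (P (n + 1) * (X ^ 2 * derivative (P n))) = n * h (n + 1) := by
  rcases n with _ | n
  · simp [hP.zero_eq_one]
  · have hdeg : (X ^ 2 * derivative (P (n + 1))).natDegree ≤ 2 + n :=
      natDegree_mul_le_of_le (natDegree_X_pow_le 2) (hP.natDegree_derivative_le (n + 1))
    rw [hP.apply_mul_of_natDegree_le (by lia), coeff_X_pow_mul, coeff_derivative, hP.coeff_self,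
      one_mul, Nat.cast_succ]

theorem apply_X_mul_succ_mul (hP : IsSymmetricOPS L P γ h) (n : ℕ) :
    L (X * (P (n + 1) * P n)) = h (n + 1) := by
  simpa only [pow_one] using hP.apply_X_pow_mul_add_mul 1 n

theorem apply_X_sq_mul_self (hP : IsSymmetricOPS L P γ h) (n : ℕ) :
    L (X ^ 2 * (P n * P n)) = h (n + 1) + γ n * h n := by
  have hexpand : X ^ 2 * (P n * P n) =
      X * (P (n + 1) * P n) + C (γ n) * (X * (P n * P (n - 1))) := by
    linear_combination X * P n * hP.X_mul n
  rw [hexpand, map_add, map_C_mul, hP.apply_X_mul_succ_mul]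
  rcases n with _ | n
  · simp only [hP.coeff_zero, zero_mul]
  · rw [Nat.add_sub_cancel, hP.apply_X_mul_succ_mul]

theorem apply_mul_X_sq_mul_succ_mul (hP : IsSymmetricOPS L P γ h) (f : R[X]) (n : ℕ) :
    L (f * X ^ 2 * (P (n + 1) * P n)) =
      L (f * (P (n + 2) * P (n + 1))) + γ n * L (f * (P (n + 2) * P (n - 1)))
        + γ (n + 1) * L (f * (P (n + 1) * P n))
        + γ (n + 1) * (γ n * L (f * (P n * P (n - 1)))) := by
  simp only [← map_C_mul, ← map_add]
  congr 1
  linear_combination f * X * P n * hP.X_mul_succ n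
    + f * (P (n + 2) + C (γ (n + 1)) * P n) * hP.X_mul n

theorem apply_X_cube_mul_succ_mul (hP : IsSymmetricOPS L P γ h) (n : ℕ) :
    L (X ^ 3 * (P (n + 1) * P n)) = (γ n + γ (n + 1) + γ (n + 2)) * h (n + 1) := by
  have hfar : L (X * (P (n + 2) * P (n - 1))) = 0 := by
    simpa only [pow_one] using hP.apply_X_pow_mul_mul_of_lt (k := 1) (by lia)
  rw [pow_succ', hP.apply_mul_X_sq_mul_succ_mul, hfar, hP.apply_X_mul_succ_mul,
    hP.apply_X_mul_succ_mul, hP.norm_succ (n + 1)]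
  rcases n with _ | n
  · rw [hP.coeff_zero]
    ring
  · rw [Nat.add_sub_cancel, hP.apply_X_mul_succ_mul, hP.norm_succ (n + 1)]
    ring

theorem apply_X_pow_five_mul_succ_mul (hP : IsSymmetricOPS L P γ h) (n : ℕ) :
    L (X ^ 5 * (P (n + 1) * P n)) =
      (γ n * (γ (n - 1) + γ n + γ (n + 1)) + γ (n + 1) * (γ n + γ (n + 1) + γ (n + 2))
        + γ (n + 2) * (γ (n + 1) + γ (n + 2) + γ (n + 3)) + γ n * γ (n + 2)) * h (n + 1) := by
  rw [show (X : R[X]) ^ 5 = X ^ 3 * X ^ 2 by ring, hP.apply_mul_X_sq_mul_succ_mul,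
    hP.apply_X_cube_mul_succ_mul, hP.apply_X_cube_mul_succ_mul, hP.norm_succ (n + 1)]
  rcases n with _ | n
  · rw [hP.coeff_zero]
    ring
  · rw [Nat.add_sub_cancel, hP.apply_X_cube_mul_succ_mul, hP.apply_X_pow_mul_add_mul,
      hP.norm_succ (n + 2), hP.norm_succ (n + 1)]
    ring

theorem apply_mul_X_sq_mul_derivative_succ (hP : IsSymmetricOPS L P γ h) (n : ℕ) :
    L (P n * (X ^ 2 * derivative (P (n + 1)))) =
      (n + 1) * h (n + 1) + 2 * (∑ i ∈ Finset.range (n + 1), γ i) * h n := by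
  induction n with
  | zero =>
    have hexpand : P 0 * (X ^ 2 * derivative (P 1)) = P 1 * P 1 := by
      simp [hP.zero_eq_one, hP.one_eq_X, sq]
    simp [hexpand, hP.apply_mul_self, hP.coeff_zero]
  | succ n ih =>
    have hderiv := congrArg derivative (hP.X_mul_succ n)
    simp only [derivative_mul, derivative_add, derivative_X, derivative_C] at hderiv
    have hsplit : P (n + 1) * (X ^ 2 * derivative (P (n + 2))) =
        X ^ 2 * (P (n + 1) * P (n + 1)) + P (n + 2) * (X ^ 2 * derivative (P (n + 1)))
          + C (γ (n + 1)) * (P n * (X ^ 2 * derivative (P (n + 1))))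
          - C (γ (n + 1)) * (P (n + 1) * (X ^ 2 * derivative (P n))) := by
      linear_combination X ^ 2 * derivative (P (n + 1)) * hP.X_mul_succ n
        - X ^ 2 * P (n + 1) * hderiv
    rw [hsplit, map_sub, map_add, map_add, map_C_mul, map_C_mul, ih, hP.apply_X_sq_mul_self,
      hP.apply_succ_mul_X_sq_mul_derivative, hP.apply_succ_mul_X_sq_mul_derivative,
      Finset.sum_range_succ _ (n + 1), hP.norm_succ (n + 1), hP.norm_succ n]
    push_cast
    ring

theorem summed_laguerre_freud {a : R} (hP : IsSymmetricOPS L P γ h)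
    (hL : IsTruncatedFreud L a) {n : ℕ} (hh : IsRegular (h n)) :
    (2 * n + 3) * γ (n + 1) + 2 * ∑ i ∈ Finset.range (n + 1), γ i - (n + 1) * a =
      4 * γ (n + 1) * (γ n * (γ (n - 1) + γ n + γ (n + 1) - a)
        + γ (n + 1) * (γ n + γ (n + 1) + γ (n + 2) - a)
        + γ (n + 2) * (γ (n + 1) + γ (n + 2) + γ (n + 3) - a) + γ n * γ (n + 2)) := by
  have hleft : derivative ((X ^ 2 - C a) * (P (n + 1) * P n)) =
      C 2 * (X * (P (n + 1) * P n)) + P n * (X ^ 2 * derivative (P (n + 1)))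
        + P (n + 1) * (X ^ 2 * derivative (P n))
        - C a * (P n * derivative (P (n + 1))) - C a * (P (n + 1) * derivative (P n)) := by
    simp only [derivative_mul, derivative_sub, derivative_X_sq, derivative_C]
    ring
  have hright : X ^ 3 * ((X ^ 2 - C a) * (P (n + 1) * P n)) =
      X ^ 5 * (P (n + 1) * P n) - C a * (X ^ 3 * (P (n + 1) * P n)) := by
    ring
  have hpearson := hL (P (n + 1) * P n)
  simp only [hleft, hright, map_add, map_sub, map_C_mul, hP.apply_X_mul_succ_mul,
    hP.apply_mul_X_sq_mul_derivative_succ, hP.apply_succ_mul_X_sq_mul_derivative,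
    hP.apply_mul_derivative_succ, hP.apply_succ_mul_derivative, hP.apply_X_pow_five_mul_succ_mul,
    hP.apply_X_cube_mul_succ_mul, hP.norm_succ n] at hpearson
  apply hh.left
  dsimp only
  linear_combination hpearson

end IsSymmetricOPS

theorem truncated_freud_laguerre_freud_general {a : R} (hP : IsSymmetricOPS L P γ h)
    (hL : IsTruncatedFreud L a) (hh : ∀ n, IsRegular (h n)) (n : ℕ) :
    a =
      γ n * (4 * (γ (n - 1) * (γ (n - 2) + γ (n - 1) + γ n - a)
          + γ n * (γ (n + 1) + γ n + γ (n - 1) - a)) + 1 - 2 * n)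
        - γ (n + 1) * (4 * (γ (n + 2) * (γ (n + 3) + γ (n + 2) + γ (n + 1) - a)
          + γ (n + 1) * (γ (n + 2) + γ (n + 1) + γ n - a)) - 2 * n - 3) := by
  have hsucc := hP.summed_laguerre_freud hL (hh n)
  rcases n with _ | n
  · rw [Finset.sum_range_one] at hsucc
    simp only [hP.coeff_zero, Nat.cast_zero] at hsucc ⊢
    linear_combination -hsucc
  · have hprev := hP.summed_laguerre_freud hL (hh n)
    rw [Finset.sum_range_succ] at hsucc
    push_cast at hsucc ⊢
    linear_combination hprev - hsucc

end OrthogonalPolynomials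

/-- Laguerre–Freud equation for the recurrence coefficients of the monic
orthogonal polynomials with respect to the weight `e^{-x⁴}` on `[-z, z]`. -/
theorem truncated_freud_laguerre_freud (z : ℝ) (hz : 0 < z)
    (P : ℕ → Polynomial ℝ) (γ h : ℕ → ℝ)
    (hmonic : ∀ n, (P n).Monic)
    (hdeg : ∀ n, (P n).natDegree = n)
    (horth : ∀ m n, m ≠ n →
      ∫ x in (-z)..z, (P m).eval x * (P n).eval x * Real.exp (-x ^ 4) = 0)
    (hh : ∀ n, h n = ∫ x in (-z)..z, ((P n).eval x) ^ 2 * Real.exp (-x ^ 4))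
    (hhpos : ∀ n, 0 < h n)
    (hP0 : P 0 = 1) (hP1 : P 1 = Polynomial.X)
    (hrec : ∀ n, Polynomial.X * P (n + 1) = P (n + 2) + Polynomial.C (γ (n + 1)) * P n)
    (hγ0 : γ 0 = 0)
    (hγ : ∀ n, γ (n + 1) = h (n + 1) / h n)
    (n : ℕ) (hn : 2 ≤ n) :
    z ^ 2 / 4 =
      γ n * (γ (n - 1) * (γ (n - 2) + γ (n - 1) + γ n - z ^ 2)
          + γ n * (γ (n + 1) + γ n + γ (n - 1) - z ^ 2) + 1 / 4 - (n : ℝ) / 2)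
        - γ (n + 1) * (γ (n + 2) * (γ (n + 3) + γ (n + 2) + γ (n + 1) - z ^ 2)
          + γ (n + 1) * (γ (n + 2) + γ (n + 1) + γ n - z ^ 2) - (n : ℝ) / 2 - 3 / 4) := by
  have hfunctional (q : Polynomial ℝ) : expNegFunctional (Polynomial.X ^ 4) (-z) z q =
      ∫ x in (-z)..z, q.eval x * Real.exp (-x ^ 4) := by
    simp [expNegFunctional_apply]
  have hP : IsSymmetricOPS (expNegFunctional (Polynomial.X ^ 4) (-z) z) P γ h :=
    { isMonicOfDegree := fun k => ⟨hdeg k, hmonic k⟩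
      orthogonal := fun {m k} hmk => by
        simpa only [hfunctional, Polynomial.eval_mul] using horth m k hmk
      apply_mul_self := fun k => by
        simp only [hfunctional, hh, Polynomial.eval_mul, sq]
      coeff_zero := hγ0
      X_mul := by
        rintro (_ | k)
        · simp [hP0, hP1, hγ0]
        · exact hrec k }
  have hregular (k : ℕ) : IsRegular (h k) := .of_ne_zero (hhpos k).ne'
  linear_combination
    truncated_freud_laguerre_freud_general hP (isTruncatedFreud_expNegFunctional z) hregular n / 4
end

section
/- For every z > 0 and every n ≥ 1, the endpoint evaluation of the monic orthogonal polynomial P_n for the weight e^{−x⁴} on [−z, z] satisfies 2z·P_n(z)²·e^{−z⁴} = [ (2n+1) − 4·( γ_{n+2}γ_{n+1} + (γ_n + γ_{n+1})² + γ_n·γ_{n−1} ) ]·h_n. -/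
/-!
The integral of `(x P_n(x)² e^{-x⁴})'` over `[-z, z]` is computed in two ways. Since `P_n` has the
parity of `n`, the boundary terms give `2z P_n(z)² e^{-z⁴}`. Expanding the derivative instead gives
`h_n + 2 ∫ x P_n' P_n e^{-x⁴} - 4 ∫ x⁴ P_n² e^{-x⁴}`: the first integral is `n h_n`, because
`x P_n'` and `n P_n` differ by a polynomial of degree less than `n`, and the second follows from
two applications of the recurrence and from `h_{n+1} = γ_{n+1} h_n`.
-/

open Polynomial

theorem linearMap_add_smul_sq {R A : Type*} [CommSemiring R] [CommSemiring A] [Algebra R A]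
    (f : A →ₗ[R] R) (p q : A) (c : R) :
    f ((p + c • q) ^ 2) = f (p ^ 2) + 2 * c * f (p * q) + c ^ 2 * f (q ^ 2) := by
  have expansion : (p + c • q) ^ 2 = p ^ 2 + (2 * c) • (p * q) + c ^ 2 • q ^ 2 := by
    simp only [Algebra.smul_def, map_mul, map_pow, map_ofNat]
    ring
  simp only [expansion, map_add, map_smul, smul_eq_mul]

section Orthogonality

variable {R : Type*} [CommRing R] {L : R[X] →ₗ[R] R} {P : ℕ → R[X]} {γ : ℕ → R}

/-- Orthogonality of a sequence of polynomials with respect to a linear functional `L`, which plays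
the role of integration against a weight. No nondegeneracy of `L` is assumed. -/
def IsOrthogonalSequence (L : R[X] →ₗ[R] R) (P : ℕ → R[X]) : Prop :=
  Pairwise fun m n => L (P m * P n) = 0

theorem IsOrthogonalSequence.map_mul_eq_zero_of_degree_lt (orth : IsOrthogonalSequence L P)
    (degree_eq : ∀ n, (P n).degree = n) {n : ℕ} (isUnit : ∀ m < n, IsUnit (P m).leadingCoeff)
    {q : R[X]} (hq : q.degree < n) : L (q * P n) = 0 := by
  rw [← mem_degreeLT, ← Sequence.span_degreeLT ⟨P, degree_eq⟩ isUnit] at hq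
  induction hq using Submodule.span_induction with
  | mem q hq =>
    obtain ⟨m, hm, rfl⟩ := hq
    exact orth (Set.mem_Iio.1 hm).ne
  | zero => rw [zero_mul, map_zero]
  | add p q _ _ hp hq => rw [add_mul, map_add, hp, hq, add_zero]
  | smul c q _ hq => rw [smul_mul_assoc, map_smul, hq, smul_zero]

theorem degree_X_mul_derivative_sub_natDegree_smul_lt (p : R[X]) :
    (X * derivative p - (p.natDegree : R) • p).degree < (p.natDegree : WithBot ℕ) := by
  rw [degree_lt_iff_coeff_zero]
  intro m hm
  have coeff_euler : (X * derivative p).coeff m = m * p.coeff m := by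
    cases m with
    | zero => simp
    | succ m => rw [coeff_X_mul, coeff_derivative, mul_comm, Nat.cast_succ]
  rw [coeff_sub, coeff_euler, coeff_smul, smul_eq_mul]
  rcases hm.eq_or_lt with rfl | hlt
  · exact sub_self _
  · rw [coeff_eq_zero_of_natDegree_lt hlt, mul_zero, mul_zero, sub_zero]

theorem IsOrthogonalSequence.map_X_mul_derivative_mul (orth : IsOrthogonalSequence L P)
    (degree_eq : ∀ n, (P n).degree = n) {n : ℕ} (isUnit : ∀ m < n, IsUnit (P m).leadingCoeff) :
    L (X * derivative (P n) * P n) = n * L (P n ^ 2) := by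
  have degree_lt := degree_X_mul_derivative_sub_natDegree_smul_lt (P n)
  rw [natDegree_eq_of_degree_eq_some (degree_eq n)] at degree_lt
  have h := orth.map_mul_eq_zero_of_degree_lt degree_eq isUnit degree_lt
  rwa [sub_mul, map_sub, smul_mul_assoc, map_smul, smul_eq_mul, ← sq, sub_eq_zero] at h

/-- The three-term recurrence without diagonal term satisfied by the monic orthogonal polynomials
of an even weight. At `n = 0` the truncated index `n - 1` is harmless because `γ 0 = 0`. -/
structure SymmetricRecurrence (P : ℕ → R[X]) (γ : ℕ → R) : Prop where
  γ_zero : γ 0 = 0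
  X_mul : ∀ n, X * P n = P (n + 1) + γ n • P (n - 1)

namespace SymmetricRecurrence

theorem eval_neg (hrec : SymmetricRecurrence P γ) (h0 : P 0 = 1) (n : ℕ) (x : R) :
    (P n).eval (-x) = (-1) ^ n * (P n).eval x := by
  have eval_succ (n : ℕ) (y : R) :
      (P (n + 1)).eval y = y * (P n).eval y - γ n * (P (n - 1)).eval y := by
    rw [eq_sub_of_add_eq (hrec.X_mul n).symm]
    simp
  induction n using Nat.twoStepInduction with
  | zero => simp [h0]
  | one => simp [eval_succ 0, hrec.γ_zero, h0]
  | more n ih₀ ih₁ =>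
    rw [eval_succ (n + 1), eval_succ (n + 1), Nat.add_sub_cancel, ih₀, ih₁]
    ring

theorem eval_neg_sq (hrec : SymmetricRecurrence P γ) (h0 : P 0 = 1) (n : ℕ) (x : R) :
    (P n).eval (-x) ^ 2 = (P n).eval x ^ 2 := by
  rw [hrec.eval_neg h0, mul_pow, ← pow_mul', pow_mul, neg_one_sq, one_pow, one_mul]

theorem map_sq_succ (hrec : SymmetricRecurrence P γ) (orth : IsOrthogonalSequence L P) (n : ℕ) :
    L (P (n + 1) ^ 2) = γ (n + 1) * L (P n ^ 2) :=
  calc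
    L (P (n + 1) ^ 2) = L (P (n + 1) * (X * P n)) := by
      rw [hrec.X_mul, mul_add, mul_smul_comm, map_add, map_smul, orth (by lia : n + 1 ≠ n - 1),
        smul_zero, add_zero, sq]
    _ = L (X * P (n + 1) * P n) := by rw [mul_left_comm, mul_assoc]
    _ = γ (n + 1) * L (P n ^ 2) := by
      rw [hrec.X_mul, add_mul, smul_mul_assoc, map_add, map_smul, orth (by lia : n + 1 + 1 ≠ n),
        zero_add, smul_eq_mul, Nat.add_sub_cancel, sq]

theorem map_X_mul_sq (hrec : SymmetricRecurrence P γ) (orth : IsOrthogonalSequence L P) (n : ℕ) :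
    L ((X * P n) ^ 2) = (γ n + γ (n + 1)) * L (P n ^ 2) := by
  rw [hrec.X_mul, linearMap_add_smul_sq, orth (by lia : n + 1 ≠ n - 1), hrec.map_sq_succ orth]
  cases n with
  | zero => rw [hrec.γ_zero]; ring
  | succ n => rw [Nat.add_sub_cancel, hrec.map_sq_succ orth]; ring

theorem map_X_mul_mul_X_mul (hrec : SymmetricRecurrence P γ) (orth : IsOrthogonalSequence L P)
    (n : ℕ) : L (X * P (n + 2) * (X * P n)) = L (P (n + 2) ^ 2) := by
  have orthogonal_part : L (X * P (n + 2) * P (n - 1)) = 0 := by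
    rw [hrec.X_mul, add_mul, smul_mul_assoc, map_add, map_smul, orth (by lia : n + 2 + 1 ≠ n - 1),
      orth (by lia : n + 2 - 1 ≠ n - 1), smul_zero, add_zero]
  rw [hrec.X_mul n, mul_add, mul_smul_comm, map_add, map_smul, orthogonal_part, smul_zero, add_zero,
    hrec.X_mul, add_mul, smul_mul_assoc, map_add, map_smul, orth (by lia : n + 2 + 1 ≠ n + 1),
    zero_add, smul_eq_mul, hrec.map_sq_succ orth (n + 1), sq]
  rfl

theorem map_X_sq_mul_sq (hrec : SymmetricRecurrence P γ) (orth : IsOrthogonalSequence L P)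
    (n : ℕ) :
    L ((X ^ 2 * P n) ^ 2) =
      (γ (n + 2) * γ (n + 1) + (γ n + γ (n + 1)) ^ 2 + γ n * γ (n - 1)) * L (P n ^ 2) := by
  have expansion : X ^ 2 * P n = X * P (n + 1) + γ n • (X * P (n - 1)) := by
    rw [sq, mul_assoc, hrec.X_mul, mul_add, mul_smul_comm]
  rw [expansion, linearMap_add_smul_sq, hrec.map_X_mul_sq orth, hrec.map_X_mul_sq orth,
    hrec.map_sq_succ orth]
  cases n with
  | zero => rw [hrec.γ_zero]; ring
  | succ n =>
    rw [Nat.add_sub_cancel, hrec.map_X_mul_mul_X_mul orth, hrec.map_sq_succ orth (n + 1),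
      hrec.map_sq_succ orth n]
    ring

end SymmetricRecurrence

end Orthogonality

section ExponentialWeight

variable (V : ℝ[X]) (a b : ℝ)

theorem intervalIntegrable_eval_mul_exp_neg_eval (q : ℝ[X]) :
    IntervalIntegrable (fun x => q.eval x * Real.exp (-V.eval x)) MeasureTheory.volume a b :=
  Continuous.intervalIntegrable (by fun_prop) a b

/-- Integration over `[a, b]` against the weight `e^{-V}` with polynomial potential `V`, as a linear
functional on polynomials. The truncated Freud weight is the case `V = X ^ 4`, `a = -b`. -/
noncomputable def expWeightIntegral : ℝ[X] →ₗ[ℝ] ℝ where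
  toFun q := ∫ x in a..b, q.eval x * Real.exp (-V.eval x)
  map_add' p q := by
    simp only [eval_add, add_mul]
    exact intervalIntegral.integral_add (intervalIntegrable_eval_mul_exp_neg_eval V a b p)
      (intervalIntegrable_eval_mul_exp_neg_eval V a b q)
  map_smul' c q := by
    simp only [eval_smul, smul_eq_mul, mul_assoc, intervalIntegral.integral_const_mul,
      RingHom.id_apply]

theorem expWeightIntegral_apply (q : ℝ[X]) :
    expWeightIntegral V a b q = ∫ x in a..b, q.eval x * Real.exp (-V.eval x) :=
  rfl

theorem expWeightIntegral_derivative_sub (q : ℝ[X]) :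
    expWeightIntegral V a b (derivative q - derivative V * q) =
      q.eval b * Real.exp (-V.eval b) - q.eval a * Real.exp (-V.eval a) := by
  refine intervalIntegral.integral_eq_sub_of_hasDerivAt
    (f := fun x => q.eval x * Real.exp (-V.eval x)) (fun x _ => ?_)
    (intervalIntegrable_eval_mul_exp_neg_eval V a b _)
  refine ((q.hasDerivAt x).mul (V.hasDerivAt x).fun_neg.exp).congr_deriv ?_
  rw [eval_sub, eval_mul]
  ring

theorem IsOrthogonalSequence.endpoint_eval_sq_sub {V : ℝ[X]} {a b : ℝ} {P : ℕ → ℝ[X]}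
    (orth : IsOrthogonalSequence (expWeightIntegral V a b) P)
    (degree_eq : ∀ n, (P n).degree = n) (n : ℕ) :
    b * (P n).eval b ^ 2 * Real.exp (-V.eval b) - a * (P n).eval a ^ 2 * Real.exp (-V.eval a) =
      (2 * n + 1) * expWeightIntegral V a b (P n ^ 2) -
        expWeightIntegral V a b (X * derivative V * P n ^ 2) := by
  have expansion : derivative (X * P n ^ 2) - derivative V * (X * P n ^ 2) =
      P n ^ 2 + (2 : ℝ) • (X * derivative (P n) * P n) - X * derivative V * P n ^ 2 := by
    simp only [derivative_mul, derivative_X, derivative_sq, smul_eq_C_mul]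
    ring
  have isUnit (m : ℕ) : IsUnit (P m).leadingCoeff :=
    isUnit_iff_ne_zero.2 (leadingCoeff_ne_zero.2 (Sequence.ne_zero ⟨P, degree_eq⟩ m))
  have parts := expWeightIntegral_derivative_sub V a b (X * P n ^ 2)
  rw [expansion, map_sub, map_add, map_smul,
    orth.map_X_mul_derivative_mul degree_eq fun m _ => isUnit m, smul_eq_mul] at parts
  simp only [eval_mul, eval_X, eval_pow] at parts
  linear_combination -parts

end ExponentialWeight

/-- Endpoint evaluation identity for the monic orthogonal polynomial `P_n` for
the weight `e^{-x⁴}` on `[-z, z]`: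
`2z·P_n(z)²·e^{-z⁴} = ((2n+1) - 4(γ_{n+2}γ_{n+1} + (γ_n+γ_{n+1})² + γ_nγ_{n-1}))·h_n`. -/
theorem truncated_freud_endpoint_square (z : ℝ) (hz : 0 < z)
    (P : ℕ → Polynomial ℝ) (γ h : ℕ → ℝ)
    (hmonic : ∀ n, (P n).Monic)
    (hdeg : ∀ n, (P n).natDegree = n)
    (horth : ∀ m n, m ≠ n →
      ∫ x in (-z)..z, (P m).eval x * (P n).eval x * Real.exp (-x ^ 4) = 0)
    (hh : ∀ n, h n = ∫ x in (-z)..z, ((P n).eval x) ^ 2 * Real.exp (-x ^ 4))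
    (hhpos : ∀ n, 0 < h n)
    (hP0 : P 0 = 1) (hP1 : P 1 = Polynomial.X)
    (hrec : ∀ n, Polynomial.X * P (n + 1) = P (n + 2) + Polynomial.C (γ (n + 1)) * P n)
    (hγ0 : γ 0 = 0)
    (hγ : ∀ n, γ (n + 1) = h (n + 1) / h n)
    (n : ℕ) (hn : 1 ≤ n) :
    2 * z * ((P n).eval z) ^ 2 * Real.exp (-z ^ 4) =
      ((2 * (n : ℝ) + 1)
          - 4 * (γ (n + 2) * γ (n + 1) + (γ n + γ (n + 1)) ^ 2 + γ n * γ (n - 1))) * h n := by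
  set L := expWeightIntegral (X ^ 4) (-z) z
  have orth : IsOrthogonalSequence L P := fun m n hmn => by
    simpa [L, expWeightIntegral_apply] using horth m n hmn
  have norm_sq (n : ℕ) : L (P n ^ 2) = h n := by
    simp [L, expWeightIntegral_apply, hh]
  have recurrence : SymmetricRecurrence P γ := by
    refine ⟨hγ0, fun n => ?_⟩
    cases n with
    | zero => simp [hP0, hP1, hγ0]
    | succ n => rw [hrec, smul_eq_C_mul, Nat.add_sub_cancel]
  have potential : X * derivative (X ^ 4 : ℝ[X]) * P n ^ 2 = (4 : ℝ) • (X ^ 2 * P n) ^ 2 := by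
    simp only [derivative_X_pow, smul_eq_C_mul]
    push_cast
    ring
  have degree_eq (n : ℕ) : (P n).degree = n := by
    rw [degree_eq_natDegree (hmonic n).ne_zero, hdeg]
  have endpoints := orth.endpoint_eval_sq_sub degree_eq n
  rw [potential, map_smul, recurrence.map_X_sq_mul_sq orth, norm_sq,
    recurrence.eval_neg_sq hP0] at endpoints
  simp only [eval_pow, eval_X, smul_eq_mul, Even.neg_pow (by decide : Even 4)] at endpoints
  linear_combination endpoints
end

section
/- For every fixed z > 0, the quantities g_n(z) = n/2 − 2γ_n(z)·(γ_{n+1}(z) + γ_n(z) + γ_{n−1}(z)) admit the asymptotic expansion g_n(z) = n/2 − 3z⁴/8 − (3z⁴/16)·n^{−2} − (9z⁸/32)·n^{−3} − (3z⁴(22 + 27z⁸)/256)·n^{−4} + O(n^{−5}) as n → ∞; that is, the difference g_n(z) − [ n/2 − 3z⁴/8 − (3z⁴/16)n^{−2} − (9z⁸/32)n^{−3} − (3z⁴(22+27z⁸)/256)n^{−4} ] is O(n^{−5}) as n → ∞. -/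
open Asymptotics Filter

/-!
Integration by parts turns `g_n` into the boundary term `e^{-z⁴} P_n(z) P_{n-1}(z) / h_{n-1}`.
Eliminating the values `P_n(z)` leaves a closed system for `g` and `γ`: the definition of `g` and
`z² g_n² = γ_n (g_n + g_{n+1}) (g_n + g_{n-1})`. By the extremal property of monic orthogonal
polynomials `γ_n ≤ z²`, so `g_n = n / 2 + O(1)`. The system is contractive around such a solution:
an error `O(n⁻ᵏ)` in `g` becomes an error `O(n⁻ᵏ⁻¹)` in `γ` through the second equation, since
`(g_n + g_{n+1}) (g_n + g_{n-1}) ~ n²`, and then an error `O(n⁻ᵏ⁻¹)` in `g` through the first. Hence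
an explicit approximate solution, here a truncated series in `n⁻¹`, agrees with `(g, γ)` up to its
residual.
-/

namespace TruncatedFreud

section OrthogonalPolynomials

open Polynomial

/-- `P` is the sequence of monic orthogonal polynomials of the linear functional `L`: `P n` is monic
of degree `n` and `L (P m * P n) = 0` for `m ≠ n`. Encoding the weight as a functional keeps the
consequences of orthogonality purely algebraic. -/
structure IsMonicOrthogonal {R : Type*} [CommRing R] (L : R[X] →ₗ[R] R) (P : ℕ → R[X]) : Prop where
  isMonicOfDegree : ∀ n, IsMonicOfDegree (P n) n
  orthogonal : ∀ m n, m ≠ n → L (P m * P n) = 0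

namespace IsMonicOrthogonal

variable {R : Type*} [CommRing R] {L : R[X] →ₗ[R] R} {P : ℕ → R[X]}

theorem coeff_self (hP : IsMonicOrthogonal L P) (n : ℕ) : (P n).coeff n = 1 := by
  simpa [leadingCoeff, (hP.isMonicOfDegree n).natDegree_eq] using
    (hP.isMonicOfDegree n).leadingCoeff_eq

theorem isMonicOfDegree_X_pow_mul (hP : IsMonicOrthogonal L P) (k n : ℕ) :
    IsMonicOfDegree (X ^ k * P n) (n + k) := by
  have : Nontrivial R := by
    by_contra hR
    rw [not_nontrivial_iff_subsingleton] at hR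
    have hone := (hP.isMonicOfDegree 1).natDegree_eq
    exact zero_ne_one (by rwa [Subsingleton.elim (P 1) 0, natDegree_zero] at hone)
  exact add_comm k n ▸ (isMonicOfDegree_X_pow R k).mul (hP.isMonicOfDegree n)

theorem map_mul_eq_zero_of_degree_lt (hP : IsMonicOrthogonal L P) {q : R[X]} {n : ℕ}
    (hq : q.degree < n) : L (q * P n) = 0 := by
  nontriviality R
  let S : Polynomial.Sequence R :=
    ⟨P, fun i => (degree_eq_iff_natDegree_eq (hP.isMonicOfDegree i).ne_zero).2
      (hP.isMonicOfDegree i).natDegree_eq⟩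
  have hspan : q ∈ Submodule.span R (P '' Set.Iio n) := by
    have hunit : ∀ i < n, IsUnit (S i).leadingCoeff := fun i _ => by
      simp [S, (hP.isMonicOfDegree i).leadingCoeff_eq]
    exact S.span_degreeLT hunit ▸ mem_degreeLT.2 hq
  clear hq
  induction hspan using Submodule.span_induction with
  | mem p hp =>
    obtain ⟨m, hm, rfl⟩ := hp
    exact hP.orthogonal m n hm.ne
  | zero => simp
  | add p q _ _ hp hq => rw [add_mul, map_add, hp, hq, add_zero]
  | smul r p _ hp => rw [smul_mul_assoc, map_smul, hp, smul_zero]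

theorem map_mul_eq_coeff_mul (hP : IsMonicOrthogonal L P) {q : R[X]} {n : ℕ}
    (hq : q.natDegree ≤ n) : L (q * P n) = q.coeff n * L (P n ^ 2) := by
  have hlt : (q - C (q.coeff n) * P n).degree < n := by
    have hn := (hP.isMonicOfDegree n).natDegree_eq
    refine (degree_lt_iff_coeff_zero _ _).2 fun m hm => ?_
    rcases hm.eq_or_lt with rfl | hm
    · simp [hP.coeff_self]
    · simp [coeff_eq_zero_of_natDegree_lt (hq.trans_lt hm),
        coeff_eq_zero_of_natDegree_lt (hn.trans_lt hm)]
  have h := hP.map_mul_eq_zero_of_degree_lt hlt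
  rwa [sub_mul, map_sub, sub_eq_zero, mul_assoc, ← sq, C_mul', map_smul, smul_eq_mul] at h

theorem map_mul_of_isMonicOfDegree (hP : IsMonicOrthogonal L P) {q : R[X]} {n : ℕ}
    (hq : IsMonicOfDegree q n) : L (q * P n) = L (P n ^ 2) := by
  rw [hP.map_mul_eq_coeff_mul hq.natDegree_eq.le, ← hq.natDegree_eq, coeff_natDegree,
    hq.leadingCoeff_eq, one_mul]

theorem map_derivative_mul (hP : IsMonicOrthogonal L P) (n : ℕ) :
    L (derivative (P (n + 1) * P n)) = (n + 1) * L (P n ^ 2) := by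
  have hdeg : ∀ m, (P m).natDegree = m := fun m => (hP.isMonicOfDegree m).natDegree_eq
  have hlead : (derivative (P (n + 1))).coeff n = n + 1 := by
    rw [coeff_derivative, hP.coeff_self, one_mul]
  have hzero : L (derivative (P n) * P (n + 1)) = 0 := by
    refine hP.map_mul_eq_zero_of_degree_lt (degree_le_natDegree.trans_lt ?_)
    have := (natDegree_derivative_le (P n)).trans_eq (by rw [hdeg])
    exact_mod_cast (show (derivative (P n)).natDegree < n + 1 by omega)
  rw [derivative_mul, map_add, mul_comm (P (n + 1)), hzero, add_zero, hP.map_mul_eq_coeff_mul,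
    hlead]
  exact (natDegree_derivative_le _).trans_eq (by rw [hdeg, Nat.add_sub_cancel])

theorem map_sq_le_of_isMonicOfDegree {L : ℝ[X] →ₗ[ℝ] ℝ} {P : ℕ → ℝ[X]}
    (hP : IsMonicOrthogonal L P) (hL : ∀ p, 0 ≤ L (p ^ 2)) {q : ℝ[X]} {n : ℕ}
    (hq : IsMonicOfDegree q n) : L (P n ^ 2) ≤ L (q ^ 2) := by
  have hsplit : (q - P n) ^ 2 = q ^ 2 - (2 : ℝ) • (q * P n) + P n ^ 2 := by
    rw [smul_eq_C_mul, map_ofNat]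
    ring
  have h := hL (q - P n)
  rw [hsplit, map_add, map_sub, map_smul, hP.map_mul_of_isMonicOfDegree hq, smul_eq_mul] at h
  linarith

variable {γ : ℕ → R}

theorem recurrenceCoeff_mul_map_sq (hP : IsMonicOrthogonal L P)
    (hrec : ∀ n, X * P (n + 1) = P (n + 2) + C (γ (n + 1)) * P n) (n : ℕ) :
    γ (n + 1) * L (P n ^ 2) = L (P (n + 1) ^ 2) := by
  have hX : IsMonicOfDegree (X * P n) (n + 1) := by
    simpa using hP.isMonicOfDegree_X_pow_mul 1 n
  have hcomm : X * P n * P (n + 1) = P (n + 2) * P n + γ (n + 1) • P n ^ 2 := by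
    rw [smul_eq_C_mul]
    linear_combination P n * hrec n
  rw [← hP.map_mul_of_isMonicOfDegree hX, hcomm, map_add, map_smul, smul_eq_mul,
    hP.orthogonal _ _ (by omega), zero_add]

theorem map_X_mul_sq (hP : IsMonicOrthogonal L P)
    (hrec : ∀ n, X * P (n + 1) = P (n + 2) + C (γ (n + 1)) * P n) (n : ℕ) :
    L ((X * P (n + 1)) ^ 2) = (γ (n + 2) + γ (n + 1)) * L (P (n + 1) ^ 2) := by
  have hsq : (X * P (n + 1)) ^ 2 =
      P (n + 2) ^ 2 + (2 * γ (n + 1)) • (P (n + 2) * P n) + γ (n + 1) ^ 2 • P n ^ 2 := by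
    simp only [hrec, smul_eq_C_mul, C_mul, C_pow, map_ofNat]
    ring
  rw [hsq, map_add, map_add, map_smul, map_smul, hP.orthogonal _ _ (by omega), smul_eq_mul,
    smul_eq_mul]
  linear_combination γ (n + 1) * hP.recurrenceCoeff_mul_map_sq hrec n
    - hP.recurrenceCoeff_mul_map_sq hrec (n + 1)

theorem map_X_pow_three_mul (hP : IsMonicOrthogonal L P)
    (hrec : ∀ n, X * P (n + 1) = P (n + 2) + C (γ (n + 1)) * P n) (n : ℕ) :
    L (X ^ 3 * (P (n + 2) * P (n + 1))) =
      (γ (n + 3) + γ (n + 2) + γ (n + 1)) * L (P (n + 2) ^ 2) := by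
  have hsplit : X ^ 3 * (P (n + 2) * P (n + 1)) =
      (X * P (n + 2)) ^ 2 + γ (n + 1) • (X ^ 2 * P n * P (n + 2)) := by
    rw [smul_eq_C_mul]
    linear_combination X ^ 2 * P (n + 2) * hrec n
  rw [hsplit, map_add, map_smul, hP.map_X_mul_sq hrec (n + 1),
    hP.map_mul_of_isMonicOfDegree (hP.isMonicOfDegree_X_pow_mul 2 n), smul_eq_mul]
  ring

end IsMonicOrthogonal

theorem eval_neg_of_recurrence {R : Type*} [CommRing R] {P : ℕ → R[X]} {γ : ℕ → R} (h0 : P 0 = 1)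
    (h1 : P 1 = X) (hrec : ∀ n, X * P (n + 1) = P (n + 2) + C (γ (n + 1)) * P n) (x : R) (n : ℕ) :
    (P n).eval (-x) = (-1) ^ n * (P n).eval x := by
  induction n using Nat.twoStepInduction with
  | zero => simp [h0]
  | one => simp [h1]
  | more n ih ih' =>
    have hx := congrArg (eval x) (hrec n)
    have hnx := congrArg (eval (-x)) (hrec n)
    simp only [eval_mul, eval_add, eval_X, eval_C, ih, ih'] at hx hnx
    linear_combination (-1) ^ n * hx - hnx

/-- The functional `p ↦ ∫ x in a..b, p(x) e^{-V(x)}` of the exponential weight with polynomial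
potential `V`. -/
noncomputable def expWeight (V : ℝ[X]) (a b : ℝ) : ℝ[X] →ₗ[ℝ] ℝ where
  toFun p := ∫ x in a..b, p.eval x * Real.exp (-V.eval x)
  map_add' p q := by
    simp only [eval_add, add_mul]
    exact intervalIntegral.integral_add (Continuous.intervalIntegrable (by fun_prop) _ _)
      (Continuous.intervalIntegrable (by fun_prop) _ _)
  map_smul' r p := by
    simp only [eval_smul, smul_mul_assoc, intervalIntegral.integral_smul, RingHom.id_apply]

theorem expWeight_apply (V : ℝ[X]) (a b : ℝ) (p : ℝ[X]) :
    expWeight V a b p = ∫ x in a..b, p.eval x * Real.exp (-V.eval x) := rfl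

theorem expWeight_mono (V : ℝ[X]) {a b : ℝ} (hab : a ≤ b) {p q : ℝ[X]}
    (hpq : ∀ x ∈ Set.Icc a b, p.eval x ≤ q.eval x) : expWeight V a b p ≤ expWeight V a b q :=
  intervalIntegral.integral_mono_on hab (Continuous.intervalIntegrable (by fun_prop) _ _)
    (Continuous.intervalIntegrable (by fun_prop) _ _)
    fun x hx => mul_le_mul_of_nonneg_right (hpq x hx) (Real.exp_pos _).le

theorem expWeight_derivative (V : ℝ[X]) (a b : ℝ) (p : ℝ[X]) :
    expWeight V a b (derivative p) = p.eval b * Real.exp (-V.eval b)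
      - p.eval a * Real.exp (-V.eval a) + expWeight V a b (derivative V * p) := by
  have hderiv (x : ℝ) : HasDerivAt (fun x => p.eval x * Real.exp (-V.eval x))
      ((derivative p - derivative V * p).eval x * Real.exp (-V.eval x)) x := by
    have hexp : HasDerivAt (fun x => Real.exp (-V.eval x))
        (Real.exp (-V.eval x) * -(derivative V).eval x) x := (V.hasDerivAt x).neg.exp
    refine ((p.hasDerivAt x).mul hexp).congr_deriv ?_
    rw [eval_sub, eval_mul]
    ring
  have hint : expWeight V a b (derivative p - derivative V * p) = _ :=
    intervalIntegral.integral_eq_sub_of_hasDerivAt (fun x _ => hderiv x)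
      (Continuous.intervalIntegrable (by fun_prop) _ _)
  rw [← hint, map_sub, sub_add_cancel]

variable {z : ℝ} {P : ℕ → ℝ[X]} {γ : ℕ → ℝ}

theorem map_sq_succ_le (hz : 0 ≤ z) (V : ℝ[X]) (hP : IsMonicOrthogonal (expWeight V (-z) z) P)
    (n : ℕ) : expWeight V (-z) z (P (n + 1) ^ 2) ≤ z ^ 2 * expWeight V (-z) z (P n ^ 2) := by
  have hab : -z ≤ z := by linarith
  have hnonneg (p : ℝ[X]) : 0 ≤ expWeight V (-z) z (p ^ 2) := by
    simpa using expWeight_mono V hab (p := 0) (q := p ^ 2) fun x _ => by simp [sq_nonneg]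
  have hX : IsMonicOfDegree (X * P n) (n + 1) := by
    simpa using hP.isMonicOfDegree_X_pow_mul 1 n
  calc expWeight V (-z) z (P (n + 1) ^ 2)
      ≤ expWeight V (-z) z ((X * P n) ^ 2) := hP.map_sq_le_of_isMonicOfDegree hnonneg hX
    _ ≤ expWeight V (-z) z (z ^ 2 • P n ^ 2) := by
        refine expWeight_mono V hab fun x hx => ?_
        simp only [eval_pow, eval_mul, eval_X, eval_smul, smul_eq_mul, mul_pow]
        exact mul_le_mul_of_nonneg_right (sq_le_sq' hx.1 hx.2) (sq_nonneg _)
    _ = z ^ 2 * expWeight V (-z) z (P n ^ 2) := by rw [map_smul, smul_eq_mul]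

theorem abs_recurrenceCoeff_le (hz : 0 ≤ z) (V : ℝ[X])
    (hP : IsMonicOrthogonal (expWeight V (-z) z) P)
    (hpos : ∀ n, 0 < expWeight V (-z) z (P n ^ 2))
    (hrec : ∀ n, X * P (n + 1) = P (n + 2) + C (γ (n + 1)) * P n) (n : ℕ) :
    |γ (n + 1)| ≤ z ^ 2 := by
  have hγ := hP.recurrenceCoeff_mul_map_sq hrec n
  rw [abs_of_pos (pos_of_mul_pos_left (hγ ▸ hpos (n + 1)) (hpos n).le)]
  exact le_of_mul_le_mul_right (hγ ▸ map_sq_succ_le hz V hP n) (hpos n)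

theorem string_eq_boundary (hP : IsMonicOrthogonal (expWeight (X ^ 4) (-z) z) P) (h0 : P 0 = 1)
    (h1 : P 1 = X) (hrec : ∀ n, X * P (n + 1) = P (n + 2) + C (γ (n + 1)) * P n) (n : ℕ) :
    (((n + 2 : ℕ) : ℝ) / 2 - 2 * γ (n + 2) * (γ (n + 3) + γ (n + 2) + γ (n + 1))) *
        expWeight (X ^ 4) (-z) z (P (n + 1) ^ 2) =
      Real.exp (-z ^ 4) * ((P (n + 2)).eval z * (P (n + 1)).eval z) := by
  have hparts := expWeight_derivative (X ^ 4) (-z) z (P (n + 2) * P (n + 1))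
  have hV : derivative (X ^ 4 : ℝ[X]) * (P (n + 2) * P (n + 1)) =
      (4 : ℝ) • (X ^ 3 * (P (n + 2) * P (n + 1))) := by
    rw [derivative_X_pow, smul_eq_C_mul]
    push_cast
    ring
  have hsign : (-1 : ℝ) ^ (n + 2) * (-1) ^ (n + 1) = -1 := by
    rw [← pow_add]
    exact Odd.neg_one_pow ⟨n + 1, by ring⟩
  have hγ := hP.recurrenceCoeff_mul_map_sq hrec (n + 1)
  rw [hV, map_smul, hP.map_X_pow_three_mul hrec, hP.map_derivative_mul, eval_mul, eval_mul,
    eval_neg_of_recurrence h0 h1 hrec, eval_neg_of_recurrence h0 h1 hrec, smul_eq_mul] at hparts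
  have heven : (-z) ^ 4 = z ^ 4 := (show Even 4 by decide).neg_pow z
  simp only [eval_pow, eval_X, heven] at hparts
  push_cast at hparts ⊢
  set w := Real.exp (-z ^ 4)
  linear_combination hparts / 2 - 2 * (γ (n + 3) + γ (n + 2) + γ (n + 1)) * hγ
    - (P (n + 2)).eval z * (P (n + 1)).eval z * w / 2 * hsign

end OrthogonalPolynomials

section Boundary

variable {K : Type*} [Field K] {z w : K} {p h γ g : ℕ → K}

theorem add_mul_eq_boundary_sq (hγ : ∀ n, γ (n + 1) * h n = h (n + 1))
    (hp : ∀ n, z * p (n + 1) = p (n + 2) + γ (n + 1) * p n)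
    (hg : ∀ n, g (n + 2) * h (n + 1) = w * (p (n + 2) * p (n + 1))) (n : ℕ) :
    (g (n + 2) + g (n + 3)) * h (n + 2) = w * z * p (n + 2) ^ 2 := by
  linear_combination γ (n + 2) * hg n - g (n + 2) * hγ (n + 1) + hg (n + 1)
    - w * p (n + 2) * hp (n + 1)

theorem sq_mul_sq_eq_recurrenceCoeff_mul (hh : ∀ n, h n ≠ 0)
    (hγ : ∀ n, γ (n + 1) * h n = h (n + 1))
    (hp : ∀ n, z * p (n + 1) = p (n + 2) + γ (n + 1) * p n)
    (hg : ∀ n, g (n + 2) * h (n + 1) = w * (p (n + 2) * p (n + 1))) (n : ℕ) :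
    z ^ 2 * g (n + 3) ^ 2 =
      γ (n + 3) * ((g (n + 3) + g (n + 4)) * (g (n + 3) + g (n + 2))) := by
  refine mul_right_cancel₀ (pow_ne_zero 2 (hh (n + 2))) ?_
  calc z ^ 2 * g (n + 3) ^ 2 * h (n + 2) ^ 2
      = (w * z * p (n + 3) ^ 2) * (w * z * p (n + 2) ^ 2) := by
        linear_combination
          z ^ 2 * (g (n + 3) * h (n + 2) + w * (p (n + 3) * p (n + 2))) * hg (n + 1)
    _ = ((g (n + 3) + g (n + 4)) * h (n + 3)) * ((g (n + 2) + g (n + 3)) * h (n + 2)) := by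
        rw [add_mul_eq_boundary_sq hγ hp hg n, add_mul_eq_boundary_sq hγ hp hg (n + 1)]
    _ = _ := by rw [← hγ (n + 2)]; ring

end Boundary

section QuarticWeight

open Polynomial

variable {z : ℝ} {P : ℕ → ℝ[X]} {γ g : ℕ → ℝ}

theorem quartic_boundary_eq (hP : IsMonicOrthogonal (expWeight (X ^ 4) (-z) z) P)
    (hne : ∀ n, expWeight (X ^ 4) (-z) z (P n ^ 2) ≠ 0) (h0 : P 0 = 1) (h1 : P 1 = X)
    (hrec : ∀ n, X * P (n + 1) = P (n + 2) + C (γ (n + 1)) * P n)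
    (hg : ∀ n, 1 ≤ n → g n = n / 2 - 2 * γ n * (γ (n + 1) + γ n + γ (n - 1))) {n : ℕ}
    (hn : 3 ≤ n) :
    z ^ 2 * g n ^ 2 = γ n * ((g n + g (n + 1)) * (g n + g (n - 1))) := by
  have hp (n : ℕ) : z * (P (n + 1)).eval z = (P (n + 2)).eval z + γ (n + 1) * (P n).eval z := by
    simpa using congrArg (eval z) (hrec n)
  have hparts (n : ℕ) : g (n + 2) * expWeight (X ^ 4) (-z) z (P (n + 1) ^ 2) =
      Real.exp (-z ^ 4) * ((P (n + 2)).eval z * (P (n + 1)).eval z) := by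
    rw [hg _ (by omega), ← string_eq_boundary hP h0 h1 hrec n]
    rfl
  obtain ⟨m, rfl⟩ := Nat.exists_eq_add_of_le' hn
  exact sq_mul_sq_eq_recurrenceCoeff_mul (p := fun n => (P n).eval z) hne
    (hP.recurrenceCoeff_mul_map_sq hrec) hp hparts m

theorem isBigO_one_recurrenceCoeff (hz : 0 ≤ z) (V : ℝ[X])
    (hP : IsMonicOrthogonal (expWeight V (-z) z) P)
    (hpos : ∀ n, 0 < expWeight V (-z) z (P n ^ 2))
    (hrec : ∀ n, X * P (n + 1) = P (n + 2) + C (γ (n + 1)) * P n) :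
    γ =O[atTop] fun _ => (1 : ℝ) := by
  refine IsBigO.of_bound (z ^ 2) ?_
  filter_upwards [eventually_ge_atTop 1] with n hn
  obtain ⟨m, rfl⟩ := Nat.exists_eq_add_of_le' hn
  simpa using abs_recurrenceCoeff_le hz V hP hpos hrec m

end QuarticWeight

section InversePowers

open Topology

variable {α : Type*} {l : Filter α} {y : α → ℝ}

theorem isBigO_inv_pow_mul (hy : Tendsto y l atTop) (k : ℕ) {Q : ℝ → ℝ} (hQ : ContinuousAt Q 0) :
    (fun i => (y i)⁻¹ ^ k * Q (y i)⁻¹) =O[l] fun i => (y i)⁻¹ ^ k := by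
  have hone : (fun i => Q (y i)⁻¹) =O[l] fun _ => (1 : ℝ) :=
    (hQ.tendsto.comp (tendsto_inv_atTop_zero.comp hy)).isBigO_one ℝ
  simpa using (isBigO_refl (fun i => (y i)⁻¹ ^ k) l).mul hone

theorem isBigO_inv_pow_of_le (hy : Tendsto y l atTop) {j k : ℕ} (hjk : j ≤ k) :
    (fun i => (y i)⁻¹ ^ k) =O[l] fun i => (y i)⁻¹ ^ j := by
  simpa only [← pow_add, Nat.add_sub_cancel' hjk] using
    isBigO_inv_pow_mul hy j (continuous_pow (k - j)).continuousAt

theorem isBigO_mul_inv_pow_succ {f g : α → ℝ} {k : ℕ} (hf : f =O[l] y)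
    (hg : g =O[l] fun i => (y i)⁻¹ ^ (k + 1)) :
    (fun i => f i * g i) =O[l] fun i => (y i)⁻¹ ^ k := by
  refine (hf.mul hg).trans (IsBigO.of_bound 1 (Eventually.of_forall fun i => ?_))
  rcases eq_or_ne (y i) 0 with h | h
  · simp [h]
  · rw [pow_succ', mul_inv_cancel_left₀ h, one_mul]

theorem isBigO_one_add_inv_pow_sub (j : ℕ) :
    (fun x : ℝ => ((1 + x) ^ j)⁻¹ - (1 - j * x + j * (j + 1) / 2 * x ^ 2))
      =O[𝓝 0] fun x => x ^ 3 := by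
  have hcont : (fun x : ℝ => (1 + x)⁻¹) =O[𝓝 0] fun _ => (1 : ℝ) :=
    (ContinuousAt.inv₀ (by fun_prop) (by norm_num)).tendsto.isBigO_one ℝ
  induction j with
  | zero => simpa using isBigO_zero _ _
  | succ j ih =>
    have hcube := (isBigO_refl (fun x : ℝ => x ^ 3) (𝓝 0)).const_mul_left
      ((j + 1) * (j + 2) / 2 : ℝ)
    refine (hcont.mul (ih.sub hcube)).congr' ?_ (by simp)
    have hne : ∀ᶠ x : ℝ in 𝓝 0, 1 + x ≠ 0 :=
      ContinuousAt.eventually_ne (by fun_prop) (by norm_num)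
    filter_upwards [hne] with x hx
    push_cast
    field_simp
    ring

theorem isBigO_add_const_inv_pow_sub (s : ℝ) (j : ℕ) :
    (fun t : ℝ => (t + s)⁻¹ ^ j -
        (t⁻¹ ^ j - j * s * t⁻¹ ^ (j + 1) + j * (j + 1) / 2 * s ^ 2 * t⁻¹ ^ (j + 2)))
      =O[atTop] fun t => t⁻¹ ^ (j + 3) := by
  have hs : Tendsto (fun t : ℝ => s * t⁻¹) atTop (𝓝 0) := by
    simpa using tendsto_inv_atTop_zero.const_mul s
  have hscale : (fun t : ℝ => (s * t⁻¹) ^ 3) =O[atTop] fun t => t⁻¹ ^ 3 := by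
    simpa only [mul_pow] using (isBigO_refl (fun t : ℝ => t⁻¹ ^ 3) atTop).const_mul_left (s ^ 3)
  have h := (isBigO_refl (fun t : ℝ => t⁻¹ ^ j) atTop).mul
    (((isBigO_one_add_inv_pow_sub j).comp_tendsto hs).trans hscale)
  refine h.congr' ?_ (.of_forall fun t => (pow_add _ _ _).symm)
  filter_upwards [eventually_ne_atTop 0] with t ht
  have hfactor : (t + s)⁻¹ = t⁻¹ * (1 + s * t⁻¹)⁻¹ := by
    rw [← mul_inv]
    congr 1
    field_simp
  simp only [Function.comp_apply, hfactor, mul_pow, inv_pow]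
  ring

end InversePowers

section NatShift

variable {f : ℕ → ℝ} {k : ℕ}

theorem isBigO_succ_of_isBigO_inv_pow (hf : f =O[atTop] fun n : ℕ => (n : ℝ)⁻¹ ^ k) :
    (fun n => f (n + 1)) =O[atTop] fun n : ℕ => (n : ℝ)⁻¹ ^ k := by
  refine (hf.comp_tendsto (tendsto_add_atTop_nat 1)).trans (IsBigO.pow ?_ k)
  refine IsBigO.of_bound 1 ?_
  filter_upwards [eventually_gt_atTop 0] with n hn
  simp only [norm_inv, Real.norm_natCast, one_mul]
  gcongr
  omega

theorem isBigO_pred_of_isBigO_inv_pow (hf : f =O[atTop] fun n : ℕ => (n : ℝ)⁻¹ ^ k) :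
    (fun n => f (n - 1)) =O[atTop] fun n : ℕ => (n : ℝ)⁻¹ ^ k := by
  refine (hf.comp_tendsto (tendsto_sub_atTop_nat 1)).trans (IsBigO.pow ?_ k)
  refine IsBigO.of_bound 2 ?_
  filter_upwards [eventually_ge_atTop 2] with n hn
  have hn' : (2 : ℝ) ≤ n := by exact_mod_cast hn
  simp only [norm_inv, Real.norm_natCast, Nat.cast_pred (by omega : 0 < n)]
  rw [Real.norm_of_nonneg (by linarith), ← div_eq_mul_inv, inv_eq_one_div,
    div_le_div_iff₀ (by linarith) (by linarith)]
  linarith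

end NatShift

section Stability

variable {c : ℝ} {g γ G Γ : ℕ → ℝ} {k : ℕ}

theorem isEquivalent_add_succ (hg : (fun n => g n - n / 2) =O[atTop] fun _ => (1 : ℝ)) :
    (fun n => g n + g (n + 1)) ~[atTop] fun n => (n : ℝ) := by
  have hsucc := isBigO_succ_of_isBigO_inv_pow (k := 0) (by simpa only [pow_zero] using hg)
  have hsum := (hg.add (by simpa only [pow_zero] using hsucc)).add
    (isBigO_const_const (1 / 2 : ℝ) one_ne_zero atTop)
  refine (hsum.congr_left fun n => ?_).trans_isLittleO
    ((isLittleO_const_id_atTop (1 : ℝ)).comp_tendsto tendsto_natCast_atTop_atTop)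
  simp only [Pi.sub_apply]
  push_cast
  ring

theorem isEquivalent_add_pred (hg : (fun n => g n - n / 2) =O[atTop] fun _ => (1 : ℝ)) :
    (fun n => g n + g (n - 1)) ~[atTop] fun n => (n : ℝ) := by
  have hpred := isBigO_pred_of_isBigO_inv_pow (k := 0) (by simpa only [pow_zero] using hg)
  have hsum := (hg.add (by simpa only [pow_zero] using hpred)).sub
    (isBigO_const_const (1 / 2 : ℝ) one_ne_zero atTop)
  refine (hsum.congr' ?_ .rfl).trans_isLittleO
    ((isLittleO_const_id_atTop (1 : ℝ)).comp_tendsto tendsto_natCast_atTop_atTop)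
  filter_upwards [eventually_gt_atTop 0] with n hn
  simp only [Pi.sub_apply, Nat.cast_pred hn]
  ring

theorem isBigO_natCast_of_sub_half (hg : (fun n => g n - n / 2) =O[atTop] fun _ => (1 : ℝ)) :
    g =O[atTop] fun n => (n : ℝ) := by
  have hone : (fun _ => (1 : ℝ)) =O[atTop] fun n : ℕ => (n : ℝ) :=
    ((isLittleO_const_id_atTop (1 : ℝ)).comp_tendsto tendsto_natCast_atTop_atTop).isBigO
  simpa [div_eq_inv_mul] using
    (hg.trans hone).add ((isBigO_refl _ atTop).const_mul_left (2⁻¹ : ℝ))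

theorem neighbor_mul_sub_isBigO
    (hg : (fun n => g n - n / 2) =O[atTop] fun _ => (1 : ℝ))
    (hG : (fun n => G n - n / 2) =O[atTop] fun _ => (1 : ℝ))
    (herr : (fun n => g n - G n) =O[atTop] fun n : ℕ => (n : ℝ)⁻¹ ^ k) :
    (fun n => (g n + g (n + 1)) * (g n + g (n - 1)) - (G n + G (n + 1)) * (G n + G (n - 1)))
      =O[atTop] fun n : ℕ => (n : ℝ)⁻¹ ^ k * n := by
  have hsucc := (herr.add (isBigO_succ_of_isBigO_inv_pow herr)).mul
    (isEquivalent_add_pred hg).isBigO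
  have hpred := (herr.add (isBigO_pred_of_isBigO_inv_pow herr)).mul
    (isEquivalent_add_succ hG).isBigO
  exact (hsucc.add hpred).congr_left fun n => by ring

theorem recurrenceCoeff_sub_isBigO
    (hg : (fun n => g n - n / 2) =O[atTop] fun _ => (1 : ℝ))
    (hG : (fun n => G n - n / 2) =O[atTop] fun _ => (1 : ℝ))
    (hΓ : Γ =O[atTop] fun _ => (1 : ℝ))
    (heq : ∀ᶠ n in atTop, c * g n ^ 2 = γ n * ((g n + g (n + 1)) * (g n + g (n - 1))))
    (hres : (fun n => c * G n ^ 2 - Γ n * ((G n + G (n + 1)) * (G n + G (n - 1))))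
      =O[atTop] fun n : ℕ => (n : ℝ)⁻¹ ^ k * n)
    (herr : (fun n => g n - G n) =O[atTop] fun n : ℕ => (n : ℝ)⁻¹ ^ k) :
    (fun n => γ n - Γ n) =O[atTop] fun n : ℕ => (n : ℝ)⁻¹ ^ (k + 1) := by
  have hsq : (fun n => (g n - G n) * (g n + G n)) =O[atTop] fun n : ℕ => (n : ℝ)⁻¹ ^ k * n :=
    herr.mul ((isBigO_natCast_of_sub_half hg).add (isBigO_natCast_of_sub_half hG))
  have hprod := (hΓ.mul (neighbor_mul_sub_isBigO hg hG herr)).congr_right fun n => one_mul _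
  have hnum := ((hsq.const_mul_left c).sub hprod).add hres
  have hequiv := (isEquivalent_add_succ hg).mul (isEquivalent_add_pred hg)
  refine (hnum.mul hequiv.inv.isBigO).congr' ?_ ?_
  · filter_upwards [hequiv.isBigO_symm.eq_zero_imp, eventually_ne_atTop 0, heq] with n hzero hn hgn
    have hne : (g n + g (n + 1)) * (g n + g (n - 1)) ≠ 0 := fun h =>
      mul_self_ne_zero.2 (Nat.cast_ne_zero.2 hn) (hzero h)
    simp only [Pi.inv_apply, Pi.mul_apply]
    rw [← div_eq_mul_inv, div_eq_iff hne]
    linear_combination hgn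
  · filter_upwards [eventually_ne_atTop 0] with n hn
    simp only [Pi.inv_apply, Pi.mul_apply, pow_succ]
    field_simp

theorem string_sub_isBigO (hγ : γ =O[atTop] fun _ => (1 : ℝ)) (hΓ : Γ =O[atTop] fun _ => (1 : ℝ))
    (heq : ∀ᶠ n : ℕ in atTop, g n = n / 2 - 2 * γ n * (γ (n + 1) + γ n + γ (n - 1)))
    (hres : (fun n : ℕ => G n - (n / 2 - 2 * Γ n * (Γ (n + 1) + Γ n + Γ (n - 1))))
      =O[atTop] fun n : ℕ => (n : ℝ)⁻¹ ^ k)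
    (herr : (fun n => γ n - Γ n) =O[atTop] fun n : ℕ => (n : ℝ)⁻¹ ^ k) :
    (fun n => g n - G n) =O[atTop] fun n : ℕ => (n : ℝ)⁻¹ ^ k := by
  have hsum {f : ℕ → ℝ} {j : ℕ} (hf : f =O[atTop] fun n : ℕ => (n : ℝ)⁻¹ ^ j) :
      (fun n => f (n + 1) + f n + f (n - 1)) =O[atTop] fun n : ℕ => (n : ℝ)⁻¹ ^ j :=
    ((isBigO_succ_of_isBigO_inv_pow hf).add hf).add (isBigO_pred_of_isBigO_inv_pow hf)
  have hΓsum := hsum (j := 0) (by simpa only [pow_zero] using hΓ)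
  have hleft := (herr.mul hΓsum).congr_right (g₂ := fun n : ℕ => (n : ℝ)⁻¹ ^ k)
    fun n => by rw [pow_zero, mul_one]
  have hright := (hγ.mul (hsum herr)).congr_right (g₂ := fun n : ℕ => (n : ℝ)⁻¹ ^ k)
    fun n => one_mul _
  refine (((hleft.add hright).const_mul_left (-2)).sub hres).congr' ?_ .rfl
  filter_upwards [heq] with n hn
  rw [hn]
  ring

theorem sub_half_isBigO_one (hγ : γ =O[atTop] fun _ => (1 : ℝ))
    (heq : ∀ᶠ n : ℕ in atTop, g n = n / 2 - 2 * γ n * (γ (n + 1) + γ n + γ (n - 1))) :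
    (fun n => g n - n / 2) =O[atTop] fun _ => (1 : ℝ) := by
  simpa using string_sub_isBigO (k := 0) (G := fun n => n / 2) (Γ := 0) hγ (isBigO_zero _ _) heq
    ((isBigO_zero _ _).congr_left fun n => by simp) (by simpa using hγ)

theorem sub_isBigO_of_approximate_solution {K : ℕ}
    (hγ : γ =O[atTop] fun _ => (1 : ℝ)) (hΓ : Γ =O[atTop] fun _ => (1 : ℝ))
    (hG : (fun n => G n - n / 2) =O[atTop] fun _ => (1 : ℝ))
    (hstring : ∀ᶠ n : ℕ in atTop, g n = n / 2 - 2 * γ n * (γ (n + 1) + γ n + γ (n - 1)))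
    (hboundary : ∀ᶠ n in atTop, c * g n ^ 2 = γ n * ((g n + g (n + 1)) * (g n + g (n - 1))))
    (hstring_res : (fun n : ℕ => G n - (n / 2 - 2 * Γ n * (Γ (n + 1) + Γ n + Γ (n - 1))))
      =O[atTop] fun n : ℕ => (n : ℝ)⁻¹ ^ (K + 1))
    (hboundary_res : (fun n => c * G n ^ 2 - Γ n * ((G n + G (n + 1)) * (G n + G (n - 1))))
      =O[atTop] fun n : ℕ => (n : ℝ)⁻¹ ^ K * n) :
    (fun n => g n - G n) =O[atTop] fun n : ℕ => (n : ℝ)⁻¹ ^ (K + 1) := by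
  have hg := sub_half_isBigO_one hγ hstring
  have hpow {j k : ℕ} (hjk : j ≤ k) :
      (fun n : ℕ => (n : ℝ)⁻¹ ^ k) =O[atTop] fun n : ℕ => (n : ℝ)⁻¹ ^ j :=
    isBigO_inv_pow_of_le tendsto_natCast_atTop_atTop hjk
  suffices ∀ k ≤ K + 1, (fun n => g n - G n) =O[atTop] fun n : ℕ => (n : ℝ)⁻¹ ^ k from
    this _ le_rfl
  intro k
  induction k with
  | zero => exact fun _ => by simpa using hg.sub hG
  | succ k ih =>
    intro hk
    have hboundary_res' := hboundary_res.trans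
      ((hpow (Nat.le_of_succ_le_succ hk)).mul (isBigO_refl _ atTop))
    exact string_sub_isBigO hγ hΓ hstring (hstring_res.trans (hpow hk))
      (recurrenceCoeff_sub_isBigO hg hG hΓ hboundary hboundary_res' (ih (by omega)))

end Stability

section Expansion

theorem isBigO_inv_quartic_add_const_sub (b₂ b₃ b₄ s : ℝ) :
    (fun t : ℝ => b₂ * (t + s)⁻¹ ^ 2 + b₃ * (t + s)⁻¹ ^ 3 + b₄ * (t + s)⁻¹ ^ 4 -
        (b₂ * t⁻¹ ^ 2 + (b₃ - 2 * s * b₂) * t⁻¹ ^ 3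
          + (b₄ - 3 * s * b₃ + 3 * s ^ 2 * b₂) * t⁻¹ ^ 4))
      =O[atTop] fun t => t⁻¹ ^ 5 := by
  have htrunc (j : ℕ) (hj : 2 ≤ j) :=
    (isBigO_add_const_inv_pow_sub s j).trans
      (isBigO_inv_pow_of_le tendsto_id (by omega : 5 ≤ j + 3))
  have htail : (fun t : ℝ => t⁻¹ ^ 5 *
      (6 * s ^ 2 * b₃ - 4 * s * b₄ + 10 * s ^ 2 * b₄ * t⁻¹)) =O[atTop] fun t => t⁻¹ ^ 5 :=
    isBigO_inv_pow_mul tendsto_id 5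
      (Q := fun x => 6 * s ^ 2 * b₃ - 4 * s * b₄ + 10 * s ^ 2 * b₄ * x) (by fun_prop)
  refine (((((htrunc 2 (by simp)).const_mul_left b₂).add
    ((htrunc 3 (by simp)).const_mul_left b₃)).add
      ((htrunc 4 (by simp)).const_mul_left b₄)).add htail).congr_left fun t => ?_
  push_cast
  ring

/-- The truncated `ρ` in the expansion `γ ~ c / 4 * (1 + ρ)` of the recurrence coefficients in
powers of `t⁻¹`. -/
noncomputable def recurrenceCorrection (a t : ℝ) : ℝ :=
  t⁻¹ ^ 2 / 4 + a * t⁻¹ ^ 3 + (3 * a ^ 2 + 1 / 16) * t⁻¹ ^ 4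

/-- The truncated expansion of the recurrence coefficients on an interval with squared half-length
`c`. -/
noncomputable def recurrenceExpansion (a c t : ℝ) : ℝ := c / 4 * (1 + recurrenceCorrection a t)

/-- The truncated expansion of the boundary terms `g`. Its coefficients and those of
`recurrenceCorrection` are found by equating powers of `t⁻¹` in the string and boundary equations;
for half-length `z` the parameter is `a = 3 z ^ 4 / 8`. -/
noncomputable def boundaryExpansion (a t : ℝ) : ℝ :=
  t / 2 - a - a / 2 * t⁻¹ ^ 2 - 2 * a ^ 2 * t⁻¹ ^ 3 - a * (6 * a ^ 2 + 11 / 16) * t⁻¹ ^ 4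

theorem recurrenceCorrection_isBigO (a : ℝ) :
    recurrenceCorrection a =O[atTop] fun t => t⁻¹ ^ 2 := by
  refine (isBigO_inv_pow_mul tendsto_id 2
    (Q := fun x => 1 / 4 + a * x + (3 * a ^ 2 + 1 / 16) * x ^ 2) (by fun_prop)).congr_left
      fun t => ?_
  simp only [recurrenceCorrection, id]
  ring

theorem recurrenceExpansion_isBigO_one (a c : ℝ) :
    recurrenceExpansion a c =O[atTop] fun _ => (1 : ℝ) := by
  have hρ := (recurrenceCorrection_isBigO a).trans (isBigO_inv_pow_of_le tendsto_id zero_le_two)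
  simp only [pow_zero] at hρ
  exact ((isBigO_refl _ _).add hρ).const_mul_left (c / 4)

theorem boundaryExpansion_sub_isBigO (a : ℝ) :
    (fun t => boundaryExpansion a t - (t / 2 - a)) =O[atTop] fun t => t⁻¹ ^ 2 := by
  refine (isBigO_inv_pow_mul tendsto_id 2
    (Q := fun x => -(a / 2) - 2 * a ^ 2 * x - a * (6 * a ^ 2 + 11 / 16) * x ^ 2)
    (by fun_prop)).congr_left fun t => ?_
  simp only [boundaryExpansion, id]
  ring

theorem boundaryExpansion_sub_half_isBigO_one (a : ℝ) :
    (fun t => boundaryExpansion a t - t / 2) =O[atTop] fun _ => (1 : ℝ) := by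
  have h := (boundaryExpansion_sub_isBigO a).trans (isBigO_inv_pow_of_le tendsto_id zero_le_two)
  simp only [pow_zero] at h
  exact (h.sub (isBigO_const_const a one_ne_zero _)).congr_left fun t => by ring

theorem boundaryExpansion_isBigO_id (a : ℝ) : boundaryExpansion a =O[atTop] fun t => t := by
  have h := ((boundaryExpansion_sub_half_isBigO_one a).trans
    (isLittleO_const_id_atTop (1 : ℝ)).isBigO).add
      ((isBigO_refl (fun t : ℝ => t) atTop).const_mul_left 2⁻¹)
  exact h.congr_left fun t => by ring

theorem boundaryExpansion_add_const_sub_isBigO (a s : ℝ) :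
    (fun t => boundaryExpansion a (t + s) - (boundaryExpansion a t + s / 2 + a * s * t⁻¹ ^ 3
        + (6 * a ^ 2 * s - 3 / 2 * a * s ^ 2) * t⁻¹ ^ 4)) =O[atTop] fun t => t⁻¹ ^ 5 := by
  refine (isBigO_inv_quartic_add_const_sub (-(a / 2)) (-(2 * a ^ 2))
    (-(a * (6 * a ^ 2 + 11 / 16))) s).congr_left fun t => ?_
  simp only [boundaryExpansion]
  ring

theorem recurrenceExpansion_add_const_sub_isBigO (a c s : ℝ) :
    (fun t => recurrenceExpansion a c (t + s) - (recurrenceExpansion a c t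
        + c / 4 * (-(s / 2) * t⁻¹ ^ 3 + (3 / 4 * s ^ 2 - 3 * a * s) * t⁻¹ ^ 4)))
      =O[atTop] fun t => t⁻¹ ^ 5 := by
  refine ((isBigO_inv_quartic_add_const_sub (1 / 4) a (3 * a ^ 2 + 1 / 16) s).const_mul_left
    (c / 4)).congr_left fun t => ?_
  simp only [recurrenceExpansion, recurrenceCorrection]
  ring

theorem boundaryExpansion_add_const_sub_half_isBigO (a s : ℝ) :
    (fun t => boundaryExpansion a (t + s) - (boundaryExpansion a t + s / 2))
      =O[atTop] fun t => t⁻¹ ^ 3 := by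
  have hcubic := isBigO_inv_pow_mul tendsto_id 3
    (Q := fun x => a * s + (6 * a ^ 2 * s - 3 / 2 * a * s ^ 2) * x) (by fun_prop)
  refine (((boundaryExpansion_add_const_sub_isBigO a s).trans
    (isBigO_inv_pow_of_le tendsto_id (by norm_num))).add hcubic).congr_left fun t => ?_
  simp only [id]
  ring

theorem boundaryExpansion_second_difference_isBigO (a : ℝ) :
    (fun t => boundaryExpansion a (t + 1) + boundaryExpansion a (t - 1) - 2 * boundaryExpansion a t)
      =O[atTop] fun t => t⁻¹ ^ 4 := by
  have hshift := ((boundaryExpansion_add_const_sub_isBigO a 1).add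
    (boundaryExpansion_add_const_sub_isBigO a (-1))).trans
      (isBigO_inv_pow_of_le tendsto_id (by norm_num : 4 ≤ 5))
  refine (hshift.add ((isBigO_refl _ _).const_mul_left (-(3 * a)))).congr_left fun t => ?_
  simp only [id, ← sub_eq_add_neg]
  ring

theorem boundaryExpansion_neighbor_mul_isBigO (a : ℝ) :
    (fun t => (boundaryExpansion a t + boundaryExpansion a (t + 1))
        * (boundaryExpansion a t + boundaryExpansion a (t - 1))
        - (4 * boundaryExpansion a t ^ 2 - 1 / 4)) =O[atTop] fun t => t⁻¹ ^ 3 := by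
  have hsucc := boundaryExpansion_add_const_sub_half_isBigO a 1
  have hpred : (fun t => boundaryExpansion a (t - 1) - (boundaryExpansion a t - 1 / 2))
      =O[atTop] fun t => t⁻¹ ^ 3 :=
    (boundaryExpansion_add_const_sub_half_isBigO a (-1)).congr_left fun t => by
      rw [← sub_eq_add_neg]
      ring
  have hcurv := isBigO_mul_inv_pow_succ (boundaryExpansion_isBigO_id a)
    (boundaryExpansion_second_difference_isBigO a)
  have hprod := (hsucc.mul hpred).trans ((isBigO_inv_pow_of_le tendsto_id
    (by norm_num : 3 ≤ 6)).congr_left fun t => pow_add t⁻¹ 3 3)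
  refine (((hcurv.const_mul_left 2).add ((hpred.sub hsucc).const_mul_left 2⁻¹)).add
    hprod).congr_left fun t => ?_
  ring

theorem recurrenceCorrection_mul_sq_isBigO (a : ℝ) :
    (fun t => 1 / 16 + recurrenceCorrection a t / 16
        - recurrenceCorrection a t * boundaryExpansion a t ^ 2) =O[atTop] fun t => t⁻¹ ^ 3 := by
  have hlead : (fun t => 1 / 16 + recurrenceCorrection a t / 16
      - recurrenceCorrection a t * (t / 2 - a) ^ 2) =O[atTop] fun t => t⁻¹ ^ 3 := by
    refine (isBigO_inv_pow_mul tendsto_id 3 (Q := fun x => a / 16 + (3 * a ^ 2 + 1 / 16) * a - a ^ 3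
      + (3 * a ^ 2 + 1 / 16) * (1 / 16 - a ^ 2) * x) (by fun_prop)).congr' ?_ .rfl
    filter_upwards [eventually_ne_atTop 0] with t ht
    simp only [recurrenceCorrection, id]
    field_simp
    ring
  have hhalf : (fun t : ℝ => t / 2) =O[atTop] fun t => t :=
    ((isBigO_refl (fun t : ℝ => t) atTop).const_mul_left 2⁻¹).congr_left fun t => by ring
  have hsum : (fun t => boundaryExpansion a t + (t / 2 - a)) =O[atTop] fun t => t :=
    (boundaryExpansion_isBigO_id a).add
      (hhalf.sub (isLittleO_const_id_atTop a).isBigO)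
  have hdiff := isBigO_mul_inv_pow_succ (k := 3) hsum
    (((recurrenceCorrection_isBigO a).mul (boundaryExpansion_sub_isBigO a)).congr_right fun t =>
      (pow_add t⁻¹ 2 2).symm)
  refine (hlead.sub hdiff).congr_left fun t => ?_
  ring

theorem boundary_residual_isBigO (a c : ℝ) :
    (fun t => c * boundaryExpansion a t ^ 2 - recurrenceExpansion a c t
        * ((boundaryExpansion a t + boundaryExpansion a (t + 1))
          * (boundaryExpansion a t + boundaryExpansion a (t - 1))))
      =O[atTop] fun t => t⁻¹ ^ 3 := by
  have hshift := ((recurrenceExpansion_isBigO_one a c).mul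
    (boundaryExpansion_neighbor_mul_isBigO a)).congr_right fun t => one_mul _
  refine (((recurrenceCorrection_mul_sq_isBigO a).const_mul_left c).sub hshift).congr_left
    fun t => ?_
  simp only [recurrenceExpansion]
  ring

theorem recurrenceExpansion_neighbor_sum_isBigO (a c : ℝ) :
    (fun t => recurrenceExpansion a c (t + 1) + recurrenceExpansion a c t
        + recurrenceExpansion a c (t - 1)
        - (3 * recurrenceExpansion a c t + 3 * c / 8 * t⁻¹ ^ 4)) =O[atTop] fun t => t⁻¹ ^ 5 := by
  refine ((recurrenceExpansion_add_const_sub_isBigO a c 1).add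
    (recurrenceExpansion_add_const_sub_isBigO a c (-1))).congr_left fun t => ?_
  rw [← sub_eq_add_neg]
  ring

theorem boundaryExpansion_add_sq_isBigO (a : ℝ) :
    (fun t => boundaryExpansion a t - t / 2 + a * (1 + recurrenceCorrection a t) ^ 2
        + a / 2 * (1 + recurrenceCorrection a t) * t⁻¹ ^ 4) =O[atTop] fun t => t⁻¹ ^ 5 := by
  refine (isBigO_inv_pow_mul tendsto_id 5 (Q := fun x =>
    a * (a + (3 * a ^ 2 + 1 / 16) * x) * (1 / 2 + a * x + (3 * a ^ 2 + 1 / 16) * x ^ 2)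
      + a / 2 * x * (1 / 4 + a * x + (3 * a ^ 2 + 1 / 16) * x ^ 2)) (by fun_prop)).congr_left
    fun t => ?_
  simp only [boundaryExpansion, recurrenceCorrection, id]
  ring

theorem string_residual_isBigO {a c : ℝ} (hac : 8 * a = 3 * c ^ 2) :
    (fun t => boundaryExpansion a t - (t / 2 - 2 * recurrenceExpansion a c t
        * (recurrenceExpansion a c (t + 1) + recurrenceExpansion a c t
          + recurrenceExpansion a c (t - 1)))) =O[atTop] fun t => t⁻¹ ^ 5 := by
  have hshift := ((recurrenceExpansion_isBigO_one a c).mul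
    (recurrenceExpansion_neighbor_sum_isBigO a c)).congr_right fun t => one_mul _
  refine ((hshift.const_mul_left 2).add (boundaryExpansion_add_sq_isBigO a)).congr_left
    fun t => ?_
  have hΓ : recurrenceExpansion a c t = c / 4 * (1 + recurrenceCorrection a t) := rfl
  rw [hΓ]
  linear_combination ((1 + recurrenceCorrection a t) ^ 2 / 8
    + (1 + recurrenceCorrection a t) * t⁻¹ ^ 4 / 16) * hac

theorem sub_boundaryExpansion_isBigO {a c : ℝ} {g γ : ℕ → ℝ} (hac : 8 * a = 3 * c ^ 2)
    (hγ : γ =O[atTop] fun _ => (1 : ℝ))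
    (hstring : ∀ᶠ n : ℕ in atTop, g n = n / 2 - 2 * γ n * (γ (n + 1) + γ n + γ (n - 1)))
    (hboundary : ∀ᶠ n in atTop, c * g n ^ 2 = γ n * ((g n + g (n + 1)) * (g n + g (n - 1)))) :
    (fun n => g n - boundaryExpansion a n) =O[atTop] fun n : ℕ => (n : ℝ)⁻¹ ^ 5 := by
  have hcast := tendsto_natCast_atTop_atTop (R := ℝ)
  refine sub_isBigO_of_approximate_solution (K := 4) hγ
    ((recurrenceExpansion_isBigO_one a c).comp_tendsto hcast)
    ((boundaryExpansion_sub_half_isBigO_one a).comp_tendsto hcast) hstring hboundary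
    (((string_residual_isBigO hac).comp_tendsto hcast).congr' ?_ .rfl)
    (((boundary_residual_isBigO a c).comp_tendsto hcast).congr' ?_ ?_)
  all_goals filter_upwards [eventually_gt_atTop 0] with n hn
  · simp only [Function.comp_apply, Nat.cast_pred hn, Nat.cast_succ]
  · simp only [Function.comp_apply, Nat.cast_pred hn, Nat.cast_succ]
  · simp only [Function.comp_apply]
    field_simp

end Expansion

end TruncatedFreud

/-- Asymptotic expansion of `g_n(z) = n/2 - 2γ_n(γ_{n+1}+γ_n+γ_{n-1})` as `n → ∞`:
`g_n = n/2 - 3z⁴/8 - (3z⁴/16)n⁻² - (9z⁸/32)n⁻³ - (3z⁴(22+27z⁸)/256)n⁻⁴ + O(n⁻⁵)`. -/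
theorem truncated_freud_gn_asymptotics (z : ℝ) (hz : 0 < z)
    (P : ℕ → Polynomial ℝ) (γ h : ℕ → ℝ)
    (hmonic : ∀ n, (P n).Monic)
    (hdeg : ∀ n, (P n).natDegree = n)
    (horth : ∀ m n, m ≠ n →
      ∫ x in (-z)..z, (P m).eval x * (P n).eval x * Real.exp (-x ^ 4) = 0)
    (hh : ∀ n, h n = ∫ x in (-z)..z, ((P n).eval x) ^ 2 * Real.exp (-x ^ 4))
    (hhpos : ∀ n, 0 < h n)
    (hP0 : P 0 = 1) (hP1 : P 1 = Polynomial.X)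
    (hrec : ∀ n, Polynomial.X * P (n + 1) = P (n + 2) + Polynomial.C (γ (n + 1)) * P n)
    (hγ0 : γ 0 = 0)
    (hγ : ∀ n, γ (n + 1) = h (n + 1) / h n)
    (g : ℕ → ℝ)
    (hg : ∀ n, 1 ≤ n → g n = (n : ℝ) / 2 - 2 * γ n * (γ (n + 1) + γ n + γ (n - 1))) :
    (fun n : ℕ => g n -
        ((n : ℝ) / 2 - 3 * z ^ 4 / 8 - (3 * z ^ 4 / 16) / (n : ℝ) ^ 2
          - (9 * z ^ 8 / 32) / (n : ℝ) ^ 3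
          - (3 * z ^ 4 * (22 + 27 * z ^ 8) / 256) / (n : ℝ) ^ 4))
      =O[atTop] fun n : ℕ => 1 / (n : ℝ) ^ 5 := by
  have hexp (p : Polynomial ℝ) : TruncatedFreud.expWeight (Polynomial.X ^ 4) (-z) z p =
      ∫ x in (-z)..z, p.eval x * Real.exp (-x ^ 4) := by
    simp [TruncatedFreud.expWeight_apply]
  have hP : TruncatedFreud.IsMonicOrthogonal
      (TruncatedFreud.expWeight (Polynomial.X ^ 4) (-z) z) P :=
    ⟨fun n => ⟨hdeg n, hmonic n⟩, fun m n hmn => by simpa [hexp] using horth m n hmn⟩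
  have hpos (n : ℕ) : 0 < TruncatedFreud.expWeight (Polynomial.X ^ 4) (-z) z (P n ^ 2) := by
    simpa [hexp, hh] using hhpos n
  have hγ_bounded := TruncatedFreud.isBigO_one_recurrenceCoeff hz.le _ hP hpos hrec
  have hboundary : ∀ᶠ n in atTop,
      z ^ 2 * g n ^ 2 = γ n * ((g n + g (n + 1)) * (g n + g (n - 1))) :=
    eventually_atTop.2 ⟨3, fun n =>
      TruncatedFreud.quartic_boundary_eq hP (fun n => (hpos n).ne') hP0 hP1 hrec hg⟩
  have hexpansion := TruncatedFreud.sub_boundaryExpansion_isBigO (a := 3 * z ^ 4 / 8) (by ring)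
    hγ_bounded (eventually_atTop.2 ⟨1, hg⟩) hboundary
  refine hexpansion.congr (fun n => ?_) fun n => by rw [one_div, inv_pow]
  simp only [TruncatedFreud.boundaryExpansion, div_eq_mul_inv, ← inv_pow]
  ring
end

section
/- For every z > 0 and every n ≥ 4, the monic orthogonal polynomials for the weight e^{−x⁴} on [−z, z] satisfy the first structure relation (x² − z²)·P′_{n+1}(x) = (n+1)·P_{n+2}(x) + B_n·P_n(x) + C_n·P_{n−2}(x) + D_n·P_{n−4}(x) (as an identity of polynomials), where B_n = 4γ_{n+1}·[ γ_{n+2}(γ_{n+3} + γ_{n+2} + γ_{n+1} + γ_n − z²) + γ_{n+1}(γ_{n+2} + γ_{n+1} + γ_n − z²) + γ_n(γ_{n+1} + γ_n + γ_{n−1} − z²) − 1/2 − n/4 ], C_n = 4γ_{n+1}γ_nγ_{n−1}·(γ_{n+2} + γ_{n+1} + γ_n + γ_{n−1} + γ_{n−2} − z²), and D_n = 4γ_{n+1}γ_nγ_{n−1}γ_{n−2}γ_{n−3}. -/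
open Polynomial

/-!
Let `L p = ∫_{-z}^{z} p(x) e^{-x⁴} dx` and `W = X² - z²`. Since `W` vanishes at `±z`, integration
by parts gives `L ((W q)') = 4 L (X³ W q)`, which is all that is needed of the weight. Applied to
`P_{n+1} q` with `deg q ≤ n`, it shows that `W P'_{n+1}` and `4 X³ W P_{n+1} - (n + 2) γ_{n+1} P_n`
have the same pairing with `q`. The recurrence expands `X³ W P_{n+1}`, and its terms in `P_j` with
`j > n` are invisible to `q`; the remaining ones are those of the structure relation. Hence the
difference of its two sides is orthogonal to all polynomials of degree at most `n`. Comparing the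
two highest coefficients shows that this difference has itself degree at most `n`, so it vanishes.
-/

variable {R : Type*} [CommRing R]

/-- `P` satisfies a three-term recurrence without diagonal term, as the monic orthogonal polynomials
of an even weight do. The convention `γ 0 = 0` makes the truncated index `n - 1` harmless. -/
structure IsSymmetricRecurrence (P : ℕ → R[X]) (γ : ℕ → R) : Prop where
  zero : P 0 = 1
  gamma_zero : γ 0 = 0
  X_mul (n : ℕ) : X * P n = P (n + 1) + C (γ n) * P (n - 1)

/-- `P` is the sequence of monic orthogonal polynomials of the symmetric functional `L`, with
recurrence coefficients `γ`. Monicity is encoded in the recurrence started at `P 0 = 1`. -/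
structure IsSymmetricOrthogonal (L : R[X] →ₗ[R] R) (P : ℕ → R[X]) (γ : ℕ → R) : Prop
    extends IsSymmetricRecurrence P γ where
  apply_mul_of_ne (m n : ℕ) (hmn : m ≠ n) : L (P m * P n) = 0
  apply_mul_self_ne_zero (n : ℕ) : L (P n * P n) ≠ 0

/-- The Pearson equation of the weight `e^{-x⁴}` truncated at the zeros of `X ^ 2 - C c`: the weak
form of `(φ w)' = (φ' - 4 x³ φ) w` with `φ = x² - c`. -/
def IsTruncatedFreudPearson (L : R[X] →ₗ[R] R) (c : R) : Prop :=
  ∀ q : R[X], L (derivative ((X ^ 2 - C c) * q)) = 4 * L (X ^ 3 * ((X ^ 2 - C c) * q))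

lemma map_C_mul_eq_mul (L : R[X] →ₗ[R] R) (a : R) (p : R[X]) : L (C a * p) = a * L p := by
  rw [← smul_eq_C_mul, map_smul, smul_eq_mul]

lemma coeff_X_mul_derivative (p : R[X]) (n : ℕ) :
    (X * derivative p).coeff n = n * p.coeff n := by
  cases n with
  | zero => simp
  | succ n => rw [coeff_X_mul, coeff_derivative, Nat.cast_succ, mul_comm]

namespace IsSymmetricRecurrence

variable {P : ℕ → R[X]} {γ : ℕ → R}

lemma coeff_of_lt (hP : IsSymmetricRecurrence P γ) {n k : ℕ} (hnk : n < k) :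
    (P n).coeff k = 0 := by
  induction n using Nat.strong_induction_on generalizing k with
  | _ n ih =>
    match n, k with
    | 0, k => rw [hP.zero, coeff_one, if_neg hnk.ne']
    | n + 1, k + 1 =>
      have h := congrArg (coeff · (k + 1)) (hP.X_mul n)
      simpa [ih n (by omega) (show n < k by omega),
        ih (n - 1) (by omega) (show n - 1 < k + 1 by omega)] using h.symm

lemma degree_lt (hP : IsSymmetricRecurrence P γ) {n k : ℕ} (hnk : n < k) :
    (P n).degree < k :=
  (degree_lt_iff_coeff_zero _ _).2 fun _ hkj ↦ hP.coeff_of_lt (hnk.trans_le hkj)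

lemma coeff_succ_succ (hP : IsSymmetricRecurrence P γ) {n k : ℕ} (hnk : n ≤ k + 1) :
    (P (n + 1)).coeff (k + 1) = (P n).coeff k := by
  have h := congrArg (coeff · (k + 1)) (hP.X_mul n)
  simpa [hP.coeff_of_lt (show n - 1 < k + 1 by omega)] using h.symm

lemma coeff_self (hP : IsSymmetricRecurrence P γ) (n : ℕ) : (P n).coeff n = 1 := by
  induction n with
  | zero => rw [hP.zero, coeff_one_zero]
  | succ n ih => rw [hP.coeff_succ_succ n.le_succ, ih]

lemma coeff_succ_self (hP : IsSymmetricRecurrence P γ) (n : ℕ) : (P (n + 1)).coeff n = 0 := by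
  induction n with
  | zero =>
    have h := congrArg (coeff · 0) (hP.X_mul 0)
    simpa [hP.gamma_zero] using h.symm
  | succ n ih => rw [hP.coeff_succ_succ le_rfl, ih]

lemma degree_sub_C_coeff_mul_lt (hP : IsSymmetricRecurrence P γ) {n : ℕ} {q : R[X]}
    (hq : q.degree < (n + 1 : ℕ)) : (q - C (q.coeff n) * P n).degree < n := by
  rw [degree_lt_iff_coeff_zero] at hq ⊢
  intro k hnk
  rw [coeff_sub, coeff_C_mul]
  rcases hnk.eq_or_lt with rfl | hlt
  · rw [hP.coeff_self, mul_one, sub_self]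
  · rw [hq k hlt, hP.coeff_of_lt hlt, mul_zero, sub_zero]

lemma degree_mul_derivative_sub_lt (hP : IsSymmetricRecurrence P γ) (c : R) (n : ℕ) :
    ((X ^ 2 - C c) * derivative (P (n + 1)) - C ((n : R) + 1) * P (n + 2)).degree <
      ((n + 1 : ℕ) : WithBot ℕ) := by
  rw [degree_lt_iff_coeff_zero]
  intro k hk
  obtain ⟨j, rfl⟩ : ∃ j, k = j + 1 := ⟨k - 1, by omega⟩
  have hcoeff : ((X ^ 2 - C c) * derivative (P (n + 1))
      - C ((n : R) + 1) * P (n + 2)).coeff (j + 1) = (j - (n + 1)) * (P (n + 1)).coeff j := by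
    rw [coeff_sub, sub_mul, coeff_sub, sq, mul_assoc, coeff_X_mul, coeff_X_mul_derivative,
      coeff_C_mul, coeff_derivative, hP.coeff_of_lt (show n + 1 < j + 1 + 1 by omega),
      coeff_C_mul, hP.coeff_succ_succ (show n + 1 ≤ j + 1 from hk)]
    ring
  rw [hcoeff]
  rcases (Nat.le_of_succ_le_succ hk).eq_or_lt with rfl | hlt
  · rw [hP.coeff_succ_self, mul_zero]
  rcases (Nat.succ_le_of_lt hlt).eq_or_lt with rfl | hlt
  · rw [Nat.cast_succ, sub_self, zero_mul]
  · rw [hP.coeff_of_lt hlt, mul_zero]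

lemma X_sq_mul (hP : IsSymmetricRecurrence P γ) (n : ℕ) :
    X ^ 2 * P n =
      P (n + 2) + C (γ (n + 1) + γ n) * P n + C (γ n * γ (n - 1)) * P (n - 2) := by
  have hsucc : X * P (n + 1) = P (n + 2) + C (γ (n + 1)) * P n := hP.X_mul (n + 1)
  have hpred : C (γ n) * (X * P (n - 1)) = C (γ n) * (P n + C (γ (n - 1)) * P (n - 2)) := by
    cases n with
    | zero => simp only [hP.gamma_zero, C_0, zero_mul]
    | succ n => exact congrArg _ (hP.X_mul n)
  simp only [C_add, C_mul]
  linear_combination X * hP.X_mul n + hsucc + hpred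

/- The factor `γ n * γ (n - 1)` vanishes when the index `n - 2` is truncated. -/
lemma C_gamma_mul_X_sq_mul (hP : IsSymmetricRecurrence P γ) (n : ℕ) :
    C (γ n * γ (n - 1)) * (X ^ 2 * P (n - 2)) =
      C (γ n * γ (n - 1)) * (P n + C (γ (n - 1) + γ (n - 2)) * P (n - 2)
        + C (γ (n - 2) * γ (n - 3)) * P (n - 4)) := by
  match n with
  | 0 | 1 => simp only [hP.gamma_zero, tsub_self, zero_mul, mul_zero, C_0]
  | n + 2 => exact congrArg _ (hP.X_sq_mul n)

lemma X_pow_three_mul_succ (hP : IsSymmetricRecurrence P γ) (n : ℕ) :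
    X ^ 3 * P (n + 1) = P (n + 4) + C (γ (n + 3) + γ (n + 2) + γ (n + 1)) * P (n + 2)
      + C (γ (n + 1) * (γ (n + 2) + γ (n + 1) + γ n)) * P n
      + C (γ (n + 1) * (γ n * γ (n - 1))) * P (n - 2) := by
  have hsucc : X * P (n + 1) = P (n + 2) + C (γ (n + 1)) * P n := hP.X_mul (n + 1)
  have hupper : X ^ 2 * P (n + 2) =
      P (n + 4) + C (γ (n + 3) + γ (n + 2)) * P (n + 2) + C (γ (n + 2) * γ (n + 1)) * P n :=
    hP.X_sq_mul (n + 2)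
  have hlower := hP.X_sq_mul n
  simp only [C_add, C_mul] at hupper hlower ⊢
  linear_combination X ^ 2 * hsucc + hupper + C (γ (n + 1)) * hlower

lemma exists_X_pow_three_mul_eq (hP : IsSymmetricRecurrence P γ) (c : R) (n : ℕ) :
    ∃ a b : R, X ^ 3 * ((X ^ 2 - C c) * P (n + 1)) =
      P (n + 6) + C a * P (n + 4) + C b * P (n + 2)
      + C (γ (n + 1) *
          (γ (n + 2) * (γ (n + 3) + γ (n + 2) + γ (n + 1) + γ n - c)
            + γ (n + 1) * (γ (n + 2) + γ (n + 1) + γ n - c)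
            + γ n * (γ (n + 1) + γ n + γ (n - 1) - c))) * P n
      + C (γ (n + 1) * γ n * γ (n - 1) *
          (γ (n + 2) + γ (n + 1) + γ n + γ (n - 1) + γ (n - 2) - c)) * P (n - 2)
      + C (γ (n + 1) * γ n * γ (n - 1) * γ (n - 2) * γ (n - 3)) * P (n - 4) := by
  refine ⟨γ (n + 5) + γ (n + 4) + (γ (n + 3) + γ (n + 2) + γ (n + 1)) - c,
    γ (n + 4) * γ (n + 3) + (γ (n + 3) + γ (n + 2) + γ (n + 1)) * (γ (n + 3) + γ (n + 2) - c)
      + γ (n + 1) * (γ (n + 2) + γ (n + 1) + γ n), ?_⟩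
  have hcube := hP.X_pow_three_mul_succ n
  have hadd_four : X ^ 2 * P (n + 4) = P (n + 6) + C (γ (n + 5) + γ (n + 4)) * P (n + 4)
      + C (γ (n + 4) * γ (n + 3)) * P (n + 2) := hP.X_sq_mul (n + 4)
  have hadd_two : X ^ 2 * P (n + 2) = P (n + 4) + C (γ (n + 3) + γ (n + 2)) * P (n + 2)
      + C (γ (n + 2) * γ (n + 1)) * P n := hP.X_sq_mul (n + 2)
  have hself := hP.X_sq_mul n
  have hsub_two := hP.C_gamma_mul_X_sq_mul n
  simp only [C_add, C_sub, C_mul] at hcube hadd_four hadd_two hself hsub_two ⊢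
  linear_combination (X ^ 2 - C c) * hcube + hadd_four
    + (C (γ (n + 3)) + C (γ (n + 2)) + C (γ (n + 1))) * hadd_two
    + C (γ (n + 1)) * (C (γ (n + 2)) + C (γ (n + 1)) + C (γ n)) * hself + C (γ (n + 1)) * hsub_two

end IsSymmetricRecurrence

namespace IsSymmetricOrthogonal

variable {L : R[X] →ₗ[R] R} {P : ℕ → R[X]} {γ : ℕ → R}

lemma apply_mul_eq_zero (hP : IsSymmetricOrthogonal L P γ) {m : ℕ} {q : R[X]}
    (hq : q.degree < m) : L (P m * q) = 0 := by
  suffices h : ∀ n ≤ m, ∀ r : R[X], r.degree < n → L (P m * r) = 0 from h m le_rfl q hq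
  intro n
  induction n with
  | zero =>
    intro _ r hr
    rw [Nat.cast_zero, Nat.WithBot.lt_zero_iff, degree_eq_bot] at hr
    rw [hr, mul_zero, map_zero]
  | succ n ih =>
    intro hnm r hr
    have hlower := ih (by omega) _ (hP.degree_sub_C_coeff_mul_lt hr)
    rwa [mul_sub, map_sub, mul_left_comm, map_C_mul_eq_mul, hP.apply_mul_of_ne m n (by omega),
      mul_zero, sub_zero] at hlower

lemma apply_mul_of_degree_lt_succ (hP : IsSymmetricOrthogonal L P γ) {m : ℕ} {q : R[X]}
    (hq : q.degree < (m + 1 : ℕ)) : L (P m * q) = q.coeff m * L (P m * P m) := by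
  have hlower := hP.apply_mul_eq_zero (hP.degree_sub_C_coeff_mul_lt hq)
  rwa [mul_sub, map_sub, mul_left_comm, map_C_mul_eq_mul, sub_eq_zero] at hlower

lemma eq_zero_of_forall_apply_mul_eq_zero [NoZeroDivisors R] (hP : IsSymmetricOrthogonal L P γ)
    {n : ℕ} {p : R[X]} (hp : p.degree < n) (horth : ∀ q : R[X], q.degree < n → L (p * q) = 0) :
    p = 0 := by
  by_contra hp0
  have hdeg : p.natDegree < n := (natDegree_lt_iff_degree_lt hp0).2 hp
  have hlead : p.leadingCoeff * L (P p.natDegree * P p.natDegree) = 0 := by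
    rw [leadingCoeff, ← hP.apply_mul_of_degree_lt_succ, mul_comm,
      horth _ (hP.degree_lt hdeg)]
    exact degree_le_natDegree.trans_lt (Nat.cast_lt.2 p.natDegree.lt_succ_self)
  exact (mul_ne_zero (leadingCoeff_ne_zero.2 hp0) (hP.apply_mul_self_ne_zero _)) hlead

lemma apply_mul_self_succ (hP : IsSymmetricOrthogonal L P γ) (n : ℕ) :
    L (P (n + 1) * P (n + 1)) = γ (n + 1) * L (P n * P n) := by
  have hshift : L (P (n + 1) * (X * P n)) = L (P (n + 1) * P (n + 1)) := by
    have hlow : L (P (n + 1) * (C (γ n) * P (n - 1))) = 0 := by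
      rw [mul_left_comm, map_C_mul_eq_mul, hP.apply_mul_of_ne _ _ (by omega), mul_zero]
    rw [hP.X_mul, mul_add, map_add, hlow, add_zero]
  calc L (P (n + 1) * P (n + 1)) = L (X * P (n + 1) * P n) := by
        rw [← hshift, mul_left_comm, mul_assoc]
    _ = γ (n + 1) * L (P n * P n) := by
        rw [hP.X_mul, add_mul, map_add, hP.apply_mul_of_ne _ _ (by omega), zero_add, mul_assoc,
          map_C_mul_eq_mul, Nat.add_sub_cancel]

lemma apply_mul_derivative_mul (hP : IsSymmetricOrthogonal L P γ) (c : R) {n : ℕ} {q : R[X]}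
    (hq : q.degree < (n + 1 : ℕ)) :
    L (P (n + 1) * derivative ((X ^ 2 - C c) * q)) = (n + 2) * γ (n + 1) * L (P n * q) := by
  have hq' := (degree_lt_iff_coeff_zero _ _).1 hq
  have hcoeff (k : ℕ) (hk : n ≤ k) : ((X ^ 2 - C c) * q).coeff (k + 2) = q.coeff k := by
    rw [sub_mul, coeff_sub, coeff_X_pow_mul, coeff_C_mul, hq' (k + 2) (by omega), mul_zero,
      sub_zero]
  have hdeg : (derivative ((X ^ 2 - C c) * q)).degree < (n + 1 + 1 : ℕ) := by
    rw [degree_lt_iff_coeff_zero]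
    intro k hk
    obtain ⟨j, rfl⟩ : ∃ j, k = j + 1 := ⟨k - 1, by omega⟩
    rw [coeff_derivative, hcoeff j (by omega), hq' j (by omega), zero_mul]
  rw [hP.apply_mul_of_degree_lt_succ hdeg, hP.apply_mul_of_degree_lt_succ hq, coeff_derivative,
    hcoeff n le_rfl, hP.apply_mul_self_succ]
  push_cast
  ring

lemma apply_derivative_mul (hP : IsSymmetricOrthogonal L P γ) {c : R}
    (hL : IsTruncatedFreudPearson L c) {n : ℕ} {q : R[X]} (hq : q.degree < (n + 1 : ℕ)) :
    L ((X ^ 2 - C c) * derivative (P (n + 1)) * q) =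
      4 * L (X ^ 3 * ((X ^ 2 - C c) * P (n + 1)) * q) - (n + 2) * γ (n + 1) * L (P n * q) := by
  have hparts := hL (P (n + 1) * q)
  rw [mul_left_comm, derivative_mul, map_add, hP.apply_mul_derivative_mul c hq] at hparts
  rw [eq_sub_iff_add_eq]
  convert hparts using 3 <;> ring

end IsSymmetricOrthogonal

theorem truncated_freud_structure_relation_general [NoZeroDivisors R] {L : R[X] →ₗ[R] R}
    {P : ℕ → R[X]} {γ : ℕ → R} {c : R} (hL : IsTruncatedFreudPearson L c)
    (hP : IsSymmetricOrthogonal L P γ) (n : ℕ) :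
    (X ^ 2 - C c) * derivative (P (n + 1)) =
      C ((n : R) + 1) * P (n + 2)
      + C (4 * γ (n + 1) *
          (γ (n + 2) * (γ (n + 3) + γ (n + 2) + γ (n + 1) + γ n - c)
            + γ (n + 1) * (γ (n + 2) + γ (n + 1) + γ n - c)
            + γ n * (γ (n + 1) + γ n + γ (n - 1) - c))
          - (n + 2) * γ (n + 1)) * P n
      + C (4 * γ (n + 1) * γ n * γ (n - 1) *
          (γ (n + 2) + γ (n + 1) + γ n + γ (n - 1) + γ (n - 2) - c)) * P (n - 2)
      + C (4 * γ (n + 1) * γ n * γ (n - 1) * γ (n - 2) * γ (n - 3)) * P (n - 4) := by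
  rw [← sub_eq_zero]
  apply hP.eq_zero_of_forall_apply_mul_eq_zero (n := n + 1)
  · have hmem (a : R) {k : ℕ} (hk : k < n + 1) : C a * P k ∈ degreeLT R (n + 1) := by
      rw [← smul_eq_C_mul]
      exact Submodule.smul_mem _ a (mem_degreeLT.2 (hP.degree_lt hk))
    simp only [← sub_sub, ← mem_degreeLT]
    refine sub_mem (sub_mem (sub_mem ?_ (hmem _ ?_)) (hmem _ ?_)) (hmem _ ?_)
    · exact mem_degreeLT.2 (hP.degree_mul_derivative_sub_lt c n)
    all_goals omega
  · intro q hq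
    have hhigh {k : ℕ} (hk : n + 1 ≤ k) : L (P k * q) = 0 :=
      hP.apply_mul_eq_zero (hq.trans_le (Nat.cast_le.2 hk))
    obtain ⟨a, b, hexp⟩ := hP.exists_X_pow_three_mul_eq c n
    rw [sub_mul, map_sub, hP.apply_derivative_mul hL hq, hexp]
    simp only [add_mul, mul_assoc (C _), map_add, map_C_mul_eq_mul]
    rw [hhigh (k := n + 2) (by omega), hhigh (k := n + 4) (by omega),
      hhigh (k := n + 6) (by omega)]
    ring

lemma intervalIntegrable_eval_mul_exp (p : ℝ[X]) (a b : ℝ) :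
    IntervalIntegrable (fun x ↦ p.eval x * Real.exp (-x ^ 4)) MeasureTheory.volume a b :=
  (p.continuous.mul (by fun_prop)).intervalIntegrable a b

/-- Integration against the truncated quartic Freud weight `e^{-x⁴}` on `[-z, z]`. -/
noncomputable def freudFunctional (z : ℝ) : ℝ[X] →ₗ[ℝ] ℝ where
  toFun p := ∫ x in (-z)..z, p.eval x * Real.exp (-x ^ 4)
  map_add' p q := by
    simp only [eval_add, add_mul]
    exact intervalIntegral.integral_add (intervalIntegrable_eval_mul_exp p _ _)
      (intervalIntegrable_eval_mul_exp q _ _)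
  map_smul' a p := by
    simp only [eval_smul, smul_eq_mul, mul_assoc, intervalIntegral.integral_const_mul,
      RingHom.id_apply]

lemma freudFunctional_apply (z : ℝ) (p : ℝ[X]) :
    freudFunctional z p = ∫ x in (-z)..z, p.eval x * Real.exp (-x ^ 4) := rfl

lemma hasDerivAt_eval_mul_exp (p : ℝ[X]) (x : ℝ) :
    HasDerivAt (fun x ↦ p.eval x * Real.exp (-x ^ 4))
      ((derivative p - C 4 * (X ^ 3 * p)).eval x * Real.exp (-x ^ 4)) x := by
  refine ((p.hasDerivAt x).fun_mul (hasDerivAt_pow 4 x).fun_neg.exp).congr_deriv ?_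
  simp only [eval_sub, eval_mul, eval_pow, eval_X, eval_C, Nat.cast_ofNat, Nat.reduceSub]
  ring

lemma isTruncatedFreudPearson_freudFunctional (z : ℝ) :
    IsTruncatedFreudPearson (freudFunctional z) (z ^ 2) := by
  intro q
  rw [← sub_eq_zero, ← map_C_mul_eq_mul, ← map_sub, freudFunctional_apply,
    intervalIntegral.integral_eq_sub_of_hasDerivAt (fun x _ ↦ hasDerivAt_eval_mul_exp _ x)
      (intervalIntegrable_eval_mul_exp _ _ _)]
  simp

lemma isSymmetricOrthogonal_freudFunctional {z : ℝ} {P : ℕ → ℝ[X]} {γ : ℕ → ℝ}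
    (horth : ∀ m n, m ≠ n →
      ∫ x in (-z)..z, (P m).eval x * (P n).eval x * Real.exp (-x ^ 4) = 0)
    (hnorm : ∀ n, ∫ x in (-z)..z, ((P n).eval x) ^ 2 * Real.exp (-x ^ 4) ≠ 0)
    (hP0 : P 0 = 1) (hP1 : P 1 = X)
    (hrec : ∀ n, X * P (n + 1) = P (n + 2) + C (γ (n + 1)) * P n) (hγ0 : γ 0 = 0) :
    IsSymmetricOrthogonal (freudFunctional z) P γ where
  zero := hP0
  gamma_zero := hγ0
  X_mul
    | 0 => by rw [hP0, hP1, hγ0, C_0, zero_mul, mul_one, add_zero]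
    | n + 1 => hrec n
  apply_mul_of_ne m n hmn := by simpa only [freudFunctional_apply, eval_mul] using horth m n hmn
  apply_mul_self_ne_zero n := by
    simpa only [freudFunctional_apply, eval_mul, sq] using hnorm n

/-- First structure relation for the monic orthogonal polynomials for the weight
`e^{-x⁴}` on `[-z, z]`:
`(x²-z²)·P'_{n+1} = (n+1)·P_{n+2} + B_n·P_n + C_n·P_{n-2} + D_n·P_{n-4}`. -/
theorem truncated_freud_structure_relation (z : ℝ) (hz : 0 < z)
    (P : ℕ → Polynomial ℝ) (γ h : ℕ → ℝ)
    (hmonic : ∀ n, (P n).Monic)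
    (hdeg : ∀ n, (P n).natDegree = n)
    (horth : ∀ m n, m ≠ n →
      ∫ x in (-z)..z, (P m).eval x * (P n).eval x * Real.exp (-x ^ 4) = 0)
    (hh : ∀ n, h n = ∫ x in (-z)..z, ((P n).eval x) ^ 2 * Real.exp (-x ^ 4))
    (hhpos : ∀ n, 0 < h n)
    (hP0 : P 0 = 1) (hP1 : P 1 = Polynomial.X)
    (hrec : ∀ n, Polynomial.X * P (n + 1) = P (n + 2) + Polynomial.C (γ (n + 1)) * P n)
    (hγ0 : γ 0 = 0)
    (hγ : ∀ n, γ (n + 1) = h (n + 1) / h n)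
    (n : ℕ) (hn : 4 ≤ n) :
    (X ^ 2 - C (z ^ 2)) * derivative (P (n + 1)) =
      C ((n : ℝ) + 1) * P (n + 2)
      + C (4 * γ (n + 1) *
          (γ (n + 2) * (γ (n + 3) + γ (n + 2) + γ (n + 1) + γ n - z ^ 2)
            + γ (n + 1) * (γ (n + 2) + γ (n + 1) + γ n - z ^ 2)
            + γ n * (γ (n + 1) + γ n + γ (n - 1) - z ^ 2)
            - 1 / 2 - (n : ℝ) / 4)) * P n
      + C (4 * γ (n + 1) * γ n * γ (n - 1) *
          (γ (n + 2) + γ (n + 1) + γ n + γ (n - 1) + γ (n - 2) - z ^ 2)) * P (n - 2)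
      + C (4 * γ (n + 1) * γ n * γ (n - 1) * γ (n - 2) * γ (n - 3)) * P (n - 4) := by
  have hP := isSymmetricOrthogonal_freudFunctional horth (fun n ↦ hh n ▸ (hhpos n).ne') hP0 hP1
    hrec hγ0
  convert truncated_freud_structure_relation_general
    (isTruncatedFreudPearson_freudFunctional z) hP n using 6
  ring
end
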